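/- arXiv:1904.05209 — 3 statements merged into one kernel-verified Lean document; each statement's English description precedes it below -/
import Mathlib

section
/- Fix θ∈Θ and u∈(0,1). In the recursive system with G satisfying the Lipschitz condition of the context (constants β∈(0,1), r_W ≥ 0), suppose: (a) for each v near u there are stationary-in-t families W*_t(θ|v) and Z*_t(θ|v) with Z*_t(θ|v) = G(W*_{t−1}(θ|v), Z*_{t−1}(θ|v); θ) a.s., sup_v E‖W*_t(θ|v)‖^{p_W} < ∞, sup_v E‖Z*_t(θ|v)‖^{p_Z} < ∞ (p_Z := p_W/(r_W+1)), and E[‖W*_t(θ|v)−W*_t(θ|v′)‖^{p_W}]^{1/p_W} ≤ C|v−v′| and E[‖Z*_t(θ|v)−Z*_t(θ|v′)‖^{p_Z}]^{1/p_Z} ≤ C|v−v′|; (b) W*_t(θ|·) is time-differentiable at u in the L_{α_W} sense: there is a stationary process ∂_uW*_t(θ|u) with E‖∂_uW*_t(θ|u)‖^{α_W} < ∞ and E[‖W*_t(θ|u+Δ) − W*_t(θ|u) − Δ·∂_uW*_t(θ|u)‖^{α_W}]^{1/α_W} = o(|Δ|); (c) (w,z) ↦ G(w,z;θ) is continuously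 differentiable, with ‖∂_zG(w,z;θ)‖ ≤ β and ‖∂_wG(w,z;θ)‖ ≤ C(1+‖w‖^{r_W}). Then, with α_Z := p_W·α_W/(p_W + r_W·α_W), the recursion ∂_uZ*_t(θ|u) = ∂_zG(W*_{t−1}(θ|u), Z*_{t−1}(θ|u); θ)·∂_uZ*_{t−1}(θ|u) + ∂_wG(W*_{t−1}(θ|u), Z*_{t−1}(θ|u); θ)·∂_uW*_{t−1}(θ|u) defines a stationary process with E‖∂_uZ*_t(θ|u)‖^{α_Z} < ∞, and Z*_t(θ|·) is time-differentiable at u in the L_{α_Z} sense with this derivative: E[‖Z*_t(θ|u+Δ) − Z*_t(θ|u) − Δ·∂_uZ*_t(θ|u)‖^{α_Z}]^{1/α_Z} = o(|Δ|) as Δ→0. -/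
/-!
The shift `T` need not be invertible, so the linearised recursion cannot be solved by a backward
series. Instead the derivative process is obtained as the limit of the difference quotients
`D_Δ = Δ⁻¹ • (Z(u + Δ) - Z(u))`. Its exponent `α`, given by Hölder's relation `1/α = r/p + 1/q`, may
be less than `1`, where `L_α` carries no norm; hence the argument runs with integrals of `α`-th
powers.

The basic tool is that `X ∘ T ≤ b X + Y` with `b < 1` forces `∫ X ≤ (1 - b)⁻¹ ∫ Y` as soon as `X` is
finite-valued: truncating `X` makes the measure-preservation argument legitimate without a priori
integrability. Applied to excesses over a level, it transfers uniform integrability from the forcing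
`(1 + max ‖w‖ ‖w'‖)^r ‖Δ⁻¹ • (W(u + Δ) - W(u))‖` to `D_Δ`. The remainder of the first-order
expansion of `G` is bounded by these quantities, with a relative error tending to `0` in measure, so
`D_Δ` solves the linearised recursion up to a defect vanishing in `L_α`. Since that recursion is a
contraction in `D`, the same tool makes `D_Δ` Cauchy in `L_α`, and the limit solves the recursion
exactly.
-/

set_option maxHeartbeats 1000000
set_option synthInstance.maxHeartbeats 400000

open MeasureTheory ProbabilityTheory Filter Matrix
open scoped ENNReal NNReal Topology

noncomputable section

/-- `(E[X^p])^{1/p}` for a (nonnegative) real random quantity `X`. -/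
def pMoment {Ω : Type*} [MeasurableSpace Ω] (P : Measure Ω) (p : ℝ) (X : Ω → ℝ) : ℝ≥0∞ :=
  (∫⁻ ω, ENNReal.ofReal (X ω) ^ p ∂P) ^ (1 / p)

/-- Partial Fréchet derivative of `G : ℝ^{dW} × ℝ^{dZ} → ℝ^{dZ}` in the `z`-variable. -/
def partialZ {dW dZ : ℕ} (G : (Fin dW → ℝ) × (Fin dZ → ℝ) → (Fin dZ → ℝ))
    (w : Fin dW → ℝ) (z : Fin dZ → ℝ) : (Fin dZ → ℝ) →L[ℝ] (Fin dZ → ℝ) :=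
  (fderiv ℝ G (w, z)).comp (ContinuousLinearMap.inr ℝ (Fin dW → ℝ) (Fin dZ → ℝ))

/-- Partial Fréchet derivative of `G : ℝ^{dW} × ℝ^{dZ} → ℝ^{dZ}` in the `w`-variable. -/
def partialW {dW dZ : ℕ} (G : (Fin dW → ℝ) × (Fin dZ → ℝ) → (Fin dZ → ℝ))
    (w : Fin dW → ℝ) (z : Fin dZ → ℝ) : (Fin dW → ℝ) →L[ℝ] (Fin dZ → ℝ) :=
  (fderiv ℝ G (w, z)).comp (ContinuousLinearMap.inl ℝ (Fin dW → ℝ) (Fin dZ → ℝ))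

section ENNRealPowers

lemma exists_rpow_le_mul_rpow_add {α : ℝ} (hα : 0 < α) {β : ℝ≥0∞} (hβ : β < 1) :
    ∃ b < 1, ∃ K : ℝ≥0∞, K ≠ ⊤ ∧
      ∀ x y e : ℝ≥0∞, x ≤ β * y + e → x ^ α ≤ b * y ^ α + K * e ^ α := by
  obtain ⟨c, hβc, hc⟩ := exists_between hβ
  have hcβ : c - β ≠ 0 := (tsub_pos_of_lt hβc).ne'
  have hcβ' : c - β ≠ ⊤ := ENNReal.sub_ne_top hc.ne_top
  have hK : β * (c - β)⁻¹ + 1 ≠ ⊤ := by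
    have := hβ.ne_top
    finiteness
  refine ⟨c ^ α, ENNReal.rpow_lt_one hc hα, (β * (c - β)⁻¹ + 1) ^ α,
    ENNReal.rpow_ne_top_of_nonneg hα.le hK, fun x y e h ↦ ?_⟩
  rw [← ENNReal.mul_rpow_of_nonneg _ _ hα.le, ← ENNReal.mul_rpow_of_nonneg _ _ hα.le]
  rcases le_total e ((c - β) * y) with he | he
  · refine le_add_right (ENNReal.rpow_le_rpow (h.trans ?_) hα.le)
    calc β * y + e ≤ β * y + (c - β) * y := by gcongr
      _ = c * y := by rw [← add_mul, add_tsub_cancel_of_le hβc.le]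
  · have hy : y ≤ (c - β)⁻¹ * e := by
      rwa [← ENNReal.div_eq_inv_mul, ENNReal.le_div_iff_mul_le (.inl hcβ) (.inl hcβ'), mul_comm]
    refine le_add_left (ENNReal.rpow_le_rpow (h.trans ?_) hα.le)
    calc β * y + e ≤ β * ((c - β)⁻¹ * e) + e := by gcongr
      _ = (β * (c - β)⁻¹ + 1) * e := by ring

lemma rpow_mul_rpow_le_add {s t : ℝ} (hs : 0 ≤ s) (ht : 0 ≤ t) (hst : s + t = 1) (x y : ℝ≥0∞) :
    x ^ s * y ^ t ≤ x + y :=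
  calc x ^ s * y ^ t ≤ max x y ^ s * max x y ^ t := by gcongr <;> simp
    _ = max x y := by rw [← ENNReal.rpow_add_of_nonneg _ _ hs ht, hst, ENNReal.rpow_one]
    _ ≤ x + y := max_le le_self_add le_add_self

end ENNRealPowers

section Contraction

variable {Ω : Type*} [MeasurableSpace Ω] {P : Measure Ω} [IsFiniteMeasure P] {T : Ω → Ω}

lemma setLIntegral_le_of_contraction (hT : MeasurePreserving T P P) {X Y : Ω → ℝ≥0∞}
    (hX : Measurable X) {b : ℝ≥0∞} (hb : b ≤ 1) (h : ∀ᵐ ω ∂P, X (T ω) ≤ b * X ω + Y ω)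
    {M : ℝ≥0∞} (hM : M ≠ ⊤) :
    (1 - b) * ∫⁻ ω in {ω | X ω ≤ M}, X ω ∂P ≤ ∫⁻ ω, Y ω ∂P := by
  have hs : MeasurableSet {ω | X ω ≤ M} := measurableSet_le hX measurable_const
  have hb' : Measurable fun ω ↦ min (b * X ω) M := by fun_prop
  have hfin : ∫⁻ ω, min (b * X ω) M ∂P ≠ ⊤ :=
    ne_top_of_le_ne_top (by simp [ENNReal.mul_ne_top, hM])
      (lintegral_mono fun ω ↦ min_le_right (b * X ω) M)
  -- The truncation makes `∫ min (b X) M` finite, so that it cancels from both ends.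
  refine (ENNReal.add_le_add_iff_left hfin).1 ?_
  calc ∫⁻ ω, min (b * X ω) M ∂P + (1 - b) * ∫⁻ ω in {ω | X ω ≤ M}, X ω ∂P
      = ∫⁻ ω, (min (b * X ω) M + (1 - b) * {ω | X ω ≤ M}.indicator X ω) ∂P := by
        rw [lintegral_add_left hb', lintegral_const_mul _ (hX.indicator hs),
          lintegral_indicator hs]
    _ ≤ ∫⁻ ω, min (X ω) M ∂P := by
        refine lintegral_mono fun ω ↦ ?_
        by_cases hω : X ω ≤ M
        · rw [Set.indicator_of_mem (show ω ∈ {ω | X ω ≤ M} from hω), min_eq_left hω]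
          calc min (b * X ω) M + (1 - b) * X ω ≤ b * X ω + (1 - b) * X ω := by
                gcongr; exact min_le_left _ _
            _ = X ω := by rw [← add_mul, add_tsub_cancel_of_le hb, one_mul]
        · rw [Set.indicator_of_notMem (show ω ∉ {ω | X ω ≤ M} from hω), mul_zero, add_zero]
          exact min_le_min_right _ (mul_le_of_le_one_left zero_le hb)
    _ = ∫⁻ ω, min (X (T ω)) M ∂P := (hT.lintegral_comp (hX.min measurable_const)).symm
    _ ≤ ∫⁻ ω, (min (b * X ω) M + Y ω) ∂P := by
        refine lintegral_mono_ae (h.mono fun ω hω ↦ (min_le_min_right M hω).trans ?_)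
        rw [← min_add_add_right]
        exact min_le_min_left _ le_self_add
    _ = ∫⁻ ω, min (b * X ω) M ∂P + ∫⁻ ω, Y ω ∂P := lintegral_add_left hb' _

lemma lintegral_le_of_contraction (hT : MeasurePreserving T P P) {X Y : Ω → ℝ≥0∞}
    (hX : Measurable X) (hXfin : ∀ ω, X ω ≠ ⊤) {b : ℝ≥0∞} (hb : b < 1)
    (h : ∀ᵐ ω ∂P, X (T ω) ≤ b * X ω + Y ω) :
    ∫⁻ ω, X ω ∂P ≤ (1 - b)⁻¹ * ∫⁻ ω, Y ω ∂P := by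
  have hlevels : ⋃ n : ℕ, {ω | X ω ≤ n} = Set.univ := Set.iUnion_eq_univ_iff.2 fun ω ↦
    (ENNReal.exists_nat_gt (hXfin ω)).imp fun n hn ↦ hn.le
  have hdir : Directed (· ⊆ ·) fun n : ℕ ↦ {ω | X ω ≤ n} :=
    Monotone.directed_le fun m n hmn ω (hω : X ω ≤ m) ↦ hω.trans (by exact_mod_cast hmn)
  rw [← setLIntegral_univ, ← hlevels, setLIntegral_iUnion_of_directed _ hdir]
  refine iSup_le fun n ↦ ?_
  rw [← ENNReal.div_eq_inv_mul, ENNReal.le_div_iff_mul_le (.inl (tsub_pos_of_lt hb).ne')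
    (.inl (by finiteness)), mul_comm]
  exact setLIntegral_le_of_contraction hT hX hb.le h (ENNReal.natCast_ne_top n)

end Contraction

section UniformIntegrability

variable {Ω : Type*} [MeasurableSpace Ω] {P : Measure Ω} {ι : Type*} {l : Filter ι}

/-- Uniform integrability of the family `F` along `l`: the expected excess of `F i` over a high
level is eventually small. Subtraction is the truncated one of `ℝ≥0∞`, i.e. `(F i - M)⁺`. -/
def EventuallyUI (P : Measure Ω) (l : Filter ι) (F : ι → Ω → ℝ≥0∞) : Prop :=
  ∀ ε : ℝ≥0∞, ε ≠ 0 → ∃ M : ℝ≥0∞, M ≠ ⊤ ∧ ∀ᶠ i in l, ∫⁻ ω, (F i ω - M) ∂P ≤ ε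

namespace EventuallyUI

variable {F F' : ι → Ω → ℝ≥0∞}

lemma mono (hF : EventuallyUI P l F) (h : ∀ᶠ i in l, ∀ᵐ ω ∂P, F' i ω ≤ F i ω) :
    EventuallyUI P l F' := by
  intro ε hε
  obtain ⟨M, hM, hF⟩ := hF ε hε
  refine ⟨M, hM, ?_⟩
  filter_upwards [hF, h] with i hi hle
  exact (lintegral_mono_ae (hle.mono fun ω hω ↦ tsub_le_tsub_right hω M)).trans hi

lemma add (hF : EventuallyUI P l F) (hF' : EventuallyUI P l F') (hm : ∀ i, Measurable (F i)) :
    EventuallyUI P l fun i ω ↦ F i ω + F' i ω := by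
  intro ε hε
  obtain ⟨M, hM, hFM⟩ := hF (ε / 2) (by simpa using hε)
  obtain ⟨M', hM', hFM'⟩ := hF' (ε / 2) (by simpa using hε)
  refine ⟨M + M', by simp [hM, hM'], ?_⟩
  filter_upwards [hFM, hFM'] with i hi hi'
  calc ∫⁻ ω, (F i ω + F' i ω - (M + M')) ∂P ≤ ∫⁻ ω, ((F i ω - M) + (F' i ω - M')) ∂P :=
        lintegral_mono fun ω ↦ add_tsub_add_le_tsub_add_tsub
    _ = ∫⁻ ω, (F i ω - M) ∂P + ∫⁻ ω, (F' i ω - M') ∂P :=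
        lintegral_add_left ((hm i).sub_const M) _
    _ ≤ ε / 2 + ε / 2 := add_le_add hi hi'
    _ = ε := ENNReal.add_halves ε

lemma const_mul (hF : EventuallyUI P l F) {K : ℝ≥0∞} (hK : K ≠ ⊤) :
    EventuallyUI P l fun i ω ↦ K * F i ω := by
  intro ε hε
  obtain ⟨M, hM, hFM⟩ := hF (ε / K) (ENNReal.div_ne_zero.2 ⟨hε, hK⟩)
  refine ⟨K * M, ENNReal.mul_ne_top hK hM, ?_⟩
  filter_upwards [hFM] with i hi
  calc ∫⁻ ω, (K * F i ω - K * M) ∂P = K * ∫⁻ ω, (F i ω - M) ∂P := by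
        simp_rw [← ENNReal.mul_sub fun _ _ ↦ hK]
        exact lintegral_const_mul' _ _ hK
    _ ≤ K * (ε / K) := by gcongr
    _ ≤ ε := ENNReal.mul_div_le

lemma of_tendsto (h : Tendsto (fun i ↦ ∫⁻ ω, F i ω ∂P) l (𝓝 0)) : EventuallyUI P l F := by
  intro ε hε
  refine ⟨0, by simp, ?_⟩
  filter_upwards [ENNReal.tendsto_nhds_zero.1 h ε (pos_iff_ne_zero.2 hε)] with i hi
  simpa using hi

lemma const {f : Ω → ℝ≥0∞} (hf : Measurable f) (hfi : ∫⁻ ω, f ω ∂P ≠ ⊤) :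
    EventuallyUI P l fun _ ↦ f := by
  intro ε hε
  have hlim : Tendsto (fun n : ℕ ↦ ∫⁻ ω, (f ω - n) ∂P) atTop (𝓝 (∫⁻ _, 0 ∂P)) := by
    refine tendsto_lintegral_of_dominated_convergence f (fun n ↦ by fun_prop)
      (fun n ↦ ae_of_all _ fun ω ↦ tsub_le_self) hfi ?_
    filter_upwards [ae_lt_top hf hfi] with ω hω
    obtain ⟨n, hn⟩ := ENNReal.exists_nat_gt hω.ne
    refine tendsto_const_nhds.congr' ?_
    filter_upwards [eventually_ge_atTop n] with m hm
    exact (tsub_eq_zero_of_le (hn.le.trans (by exact_mod_cast hm))).symm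
  rw [lintegral_zero] at hlim
  obtain ⟨n, hn⟩ := (ENNReal.tendsto_nhds_zero.1 hlim ε (pos_iff_ne_zero.2 hε)).exists
  exact ⟨n, by simp, Eventually.of_forall fun _ ↦ hn⟩

lemma add_rpow {α : ℝ} (hα : 0 ≤ α) (hF : EventuallyUI P l fun i ω ↦ F i ω ^ α)
    (hF' : EventuallyUI P l fun i ω ↦ F' i ω ^ α) (hm : ∀ i, Measurable (F i)) :
    EventuallyUI P l fun i ω ↦ (F i ω + F' i ω) ^ α :=
  ((hF.add hF' fun i ↦ (hm i).pow_const α).const_mul (K := 2 ^ α) (by finiteness)).mono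
    (.of_forall fun _ ↦ ae_of_all _ fun _ ↦
      ENNReal.add_rpow_le_two_rpow_mul_rpow_add_rpow _ _ hα)

lemma enorm_rpow_of_tendsto {E : Type*} [NormedAddCommGroup E] [MeasurableSpace E]
    [OpensMeasurableSpace E] {p : ℝ} (hp : 0 ≤ p) {f : ι → Ω → E} {g : Ω → E} (hg : Measurable g)
    (hgp : ∫⁻ ω, ‖g ω‖ₑ ^ p ∂P ≠ ⊤)
    (h : Tendsto (fun i ↦ ∫⁻ ω, ‖f i ω - g ω‖ₑ ^ p ∂P) l (𝓝 0)) :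
    EventuallyUI P l fun i ω ↦ ‖f i ω‖ₑ ^ p := by
  have hsum : EventuallyUI P l fun i ω ↦ (‖g ω‖ₑ + ‖f i ω - g ω‖ₑ) ^ p :=
    (const (by fun_prop) hgp).add_rpow hp (of_tendsto h) fun _ ↦ hg.enorm
  refine hsum.mono (.of_forall fun i ↦ ae_of_all _ fun ω ↦ ENNReal.rpow_le_rpow ?_ hp)
  simpa using enorm_add_le (g ω) (f i ω - g ω)

lemma of_contraction [IsFiniteMeasure P] {T : Ω → Ω} (hT : MeasurePreserving T P P)
    (hF' : EventuallyUI P l F') (hm : ∀ i, Measurable (F i)) (hfin : ∀ i ω, F i ω ≠ ⊤)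
    {b : ℝ≥0∞} (hb : b < 1) (h : ∀ᶠ i in l, ∀ᵐ ω ∂P, F i (T ω) ≤ b * F i ω + F' i ω) :
    EventuallyUI P l F := by
  intro ε hε
  have hb0 : 1 - b ≠ 0 := (tsub_pos_of_lt hb).ne'
  have hbt : 1 - b ≠ ⊤ := by simp
  obtain ⟨M, hM, hFM⟩ := hF' ((1 - b) * ε) (mul_ne_zero hb0 hε)
  set L := (1 - b)⁻¹ * M with hL
  refine ⟨L, ENNReal.mul_ne_top (by simpa using hb0) hM, ?_⟩
  -- The excess over the level `L` satisfies the recursion with forcing `F' - M`.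
  have hLM : b * L + M = L := by
    calc b * L + M = (b + (1 - b)) * L := by
          rw [add_mul, hL, ENNReal.mul_inv_cancel_left hb0 hbt]
      _ = L := by rw [add_tsub_cancel_of_le hb.le, one_mul]
  filter_upwards [hFM, h] with i hi hrec
  have hexcess : ∀ᵐ ω ∂P, F i (T ω) - L ≤ b * (F i ω - L) + (F' i ω - M) := by
    filter_upwards [hrec] with ω hω
    calc F i (T ω) - L ≤ (b * F i ω + F' i ω) - (b * L + M) := by rw [hLM]; gcongr
      _ ≤ (b * F i ω - b * L) + (F' i ω - M) := add_tsub_add_le_tsub_add_tsub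
      _ = b * (F i ω - L) + (F' i ω - M) := by rw [ENNReal.mul_sub fun _ _ ↦ hb.ne_top]
  calc ∫⁻ ω, (F i ω - L) ∂P ≤ (1 - b)⁻¹ * ∫⁻ ω, (F' i ω - M) ∂P :=
        lintegral_le_of_contraction hT ((hm i).sub_const L)
          (fun ω ↦ ne_top_of_le_ne_top (hfin i ω) tsub_le_self) hb hexcess
    _ ≤ (1 - b)⁻¹ * ((1 - b) * ε) := by gcongr
    _ = ε := ENNReal.inv_mul_cancel_left hb0 hbt

lemma tendsto_lintegral_mul (hF : EventuallyUI P l F) {η : ι → Ω → ℝ≥0∞}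
    (hη : ∀ i, Measurable (η i)) (hη_le : ∀ i ω, η i ω ≤ 1)
    (hη_zero : Tendsto (fun i ↦ ∫⁻ ω, η i ω ∂P) l (𝓝 0)) :
    Tendsto (fun i ↦ ∫⁻ ω, η i ω * F i ω ∂P) l (𝓝 0) := by
  rw [ENNReal.tendsto_nhds_zero]
  intro ε hε
  obtain ⟨M, hM, hFM⟩ := hF (ε / 2) (by simpa using hε.ne')
  have hlim : Tendsto (fun i ↦ M * ∫⁻ ω, η i ω ∂P) l (𝓝 0) := by
    simpa using ENNReal.Tendsto.const_mul hη_zero (.inr hM)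
  filter_upwards [hFM, ENNReal.tendsto_nhds_zero.1 hlim _ (ENNReal.half_pos hε.ne')] with i hi hηi
  calc ∫⁻ ω, η i ω * F i ω ∂P ≤ ∫⁻ ω, (M * η i ω + (F i ω - M)) ∂P := by
        refine lintegral_mono fun ω ↦ ?_
        calc η i ω * F i ω ≤ η i ω * (M + (F i ω - M)) := by gcongr; exact le_add_tsub
          _ = M * η i ω + η i ω * (F i ω - M) := by ring
          _ ≤ M * η i ω + (F i ω - M) := by
              gcongr; exact mul_le_of_le_one_left zero_le (hη_le i ω)
    _ = M * ∫⁻ ω, η i ω ∂P + ∫⁻ ω, (F i ω - M) ∂P := by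
        rw [lintegral_add_left (by fun_prop), lintegral_const_mul _ (hη i)]
    _ ≤ ε / 2 + ε / 2 := add_le_add hηi hi
    _ = ε := ENNReal.add_halves ε

end EventuallyUI

end UniformIntegrability

section Moments

variable {Ω : Type*} [MeasurableSpace Ω] {P : Measure Ω} {ι : Type*} {l : Filter ι}

lemma tendsto_lintegral_rpow_of_le_add {α : ℝ} (hα : 0 ≤ α) {F X Y : ι → Ω → ℝ≥0∞}
    (hX : ∀ i, Measurable (X i)) (hle : ∀ᶠ i in l, ∀ᵐ ω ∂P, F i ω ≤ X i ω + Y i ω)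
    (hX0 : Tendsto (fun i ↦ ∫⁻ ω, X i ω ^ α ∂P) l (𝓝 0))
    (hY0 : Tendsto (fun i ↦ ∫⁻ ω, Y i ω ^ α ∂P) l (𝓝 0)) :
    Tendsto (fun i ↦ ∫⁻ ω, F i ω ^ α ∂P) l (𝓝 0) := by
  have h2 : (2 : ℝ≥0∞) ^ α ≠ ⊤ := by finiteness
  have hlim : Tendsto (fun i ↦ 2 ^ α * (∫⁻ ω, X i ω ^ α ∂P + ∫⁻ ω, Y i ω ^ α ∂P)) l (𝓝 0) := by
    simpa using ENNReal.Tendsto.const_mul (hX0.add hY0) (.inr h2)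
  refine tendsto_of_tendsto_of_tendsto_of_le_of_le' tendsto_const_nhds hlim
    (.of_forall fun _ ↦ zero_le) (hle.mono fun i hi ↦ ?_)
  rw [← lintegral_add_left ((hX i).pow_const α), ← lintegral_const_mul' _ _ h2]
  exact lintegral_mono_ae (hi.mono fun ω hω ↦ (ENNReal.rpow_le_rpow hω hα).trans
    (ENNReal.add_rpow_le_two_rpow_mul_rpow_add_rpow _ _ hα))

variable {E : Type*} [NormedAddCommGroup E] [MeasurableSpace E] [BorelSpace E]
  [SecondCountableTopology E]

lemma tendstoInMeasure_of_tendsto_lintegral_rpow {p : ℝ} (hp : 0 < p) {f : ι → Ω → E} {g : Ω → E}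
    (hf : ∀ i, Measurable (f i)) (hg : Measurable g)
    (h : Tendsto (fun i ↦ ∫⁻ ω, ‖f i ω - g ω‖ₑ ^ p ∂P) l (𝓝 0)) :
    TendstoInMeasure P f l g := by
  refine tendstoInMeasure_of_tendsto_eLpNorm (p := ENNReal.ofReal p) (by simpa using hp)
    (fun i ↦ (hf i).aestronglyMeasurable) hg.aestronglyMeasurable ?_
  simp_rw [eLpNorm_eq_lintegral_rpow_enorm_toReal (by simpa using hp) ENNReal.ofReal_ne_top,
    ENNReal.toReal_ofReal hp.le]
  simpa [ENNReal.zero_rpow_of_pos, hp] using h.ennrpow_const (1 / p)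

lemma ae_exists_tendsto_of_lintegral_rpow_le [CompleteSpace E] {α : ℝ} (hα : 0 < α)
    {f : ℕ → Ω → E} (hf : ∀ n, Measurable (f n))
    (h : ∀ n, ∫⁻ ω, ‖f n ω - f (n + 1) ω‖ₑ ^ α ∂P ≤ (2⁻¹ ^ n) ^ α * 2⁻¹ ^ n) :
    ∀ᵐ ω ∂P, ∃ x, Tendsto (fun n ↦ f n ω) atTop (𝓝 x) := by
  set S : Ω → ℝ≥0∞ := fun ω ↦ ∑' n, (2 ^ n * ‖f n ω - f (n + 1) ω‖ₑ) ^ α with hS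
  have hmeas : ∀ n, Measurable fun ω ↦ (2 ^ n * ‖f n ω - f (n + 1) ω‖ₑ) ^ α := fun n ↦ by
    have := hf n
    have := hf (n + 1)
    fun_prop
  have hterm : ∀ n, ∫⁻ ω, (2 ^ n * ‖f n ω - f (n + 1) ω‖ₑ) ^ α ∂P ≤ 2⁻¹ ^ n := fun n ↦ by
    simp_rw [ENNReal.mul_rpow_of_nonneg _ _ hα.le]
    rw [lintegral_const_mul' _ _ (ENNReal.rpow_ne_top_of_nonneg hα.le (by simp))]
    calc ((2 : ℝ≥0∞) ^ n) ^ α * ∫⁻ ω, ‖f n ω - f (n + 1) ω‖ₑ ^ α ∂P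
        ≤ (2 ^ n) ^ α * ((2⁻¹ ^ n) ^ α * 2⁻¹ ^ n) := by gcongr; exact h n
      _ = 2⁻¹ ^ n := by
          rw [← mul_assoc, ← ENNReal.mul_rpow_of_nonneg _ _ hα.le, ← mul_pow,
            ENNReal.mul_inv_cancel (by simp) (by simp)]
          simp
  have hSfin : ∫⁻ ω, S ω ∂P ≠ ⊤ := by
    rw [hS, lintegral_tsum fun n ↦ (hmeas n).aemeasurable]
    refine ne_top_of_le_ne_top ?_ (ENNReal.tsum_le_tsum hterm)
    rw [ENNReal.tsum_geometric]
    simp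
  filter_upwards [ae_lt_top (Measurable.tsum hmeas) hSfin] with ω hω
  refine cauchySeq_tendsto_of_complete (cauchySeq_of_edist_le_geometric_two (S ω ^ α⁻¹)
    (ENNReal.rpow_ne_top_of_nonneg (by positivity) hω.ne) fun n ↦ ?_)
  rw [edist_eq_enorm_sub, ENNReal.le_div_iff_mul_le (by simp) (by simp), mul_comm,
    ENNReal.le_rpow_inv_iff hα]
  exact ENNReal.le_tsum n

lemma exists_tendsto_lintegral_rpow_of_cauchy [CompleteSpace E] {α : ℝ} (hα : 0 < α) [l.NeBot]
    [l.IsCountablyGenerated] {D : ι → Ω → E} (hD : ∀ i, Measurable (D i))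
    (hC : Tendsto (fun i : ι × ι ↦ ∫⁻ ω, ‖D i.1 ω - D i.2 ω‖ₑ ^ α ∂P) (l ×ˢ l) (𝓝 0)) :
    ∃ g : Ω → E, Measurable g ∧ Tendsto (fun i ↦ ∫⁻ ω, ‖D i ω - g ω‖ₑ ^ α ∂P) l (𝓝 0) := by
  obtain ⟨s, hs⟩ := exists_seq_tendsto l
  have hfast : ∀ n : ℕ, ∀ᶠ k in atTop, ∀ m ≥ k,
      ∫⁻ ω, ‖D (s k) ω - D (s m) ω‖ₑ ^ α ∂P ≤ (2⁻¹ ^ n) ^ α * 2⁻¹ ^ n := fun n ↦ by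
    have hpos : (0 : ℝ≥0∞) < (2⁻¹ ^ n) ^ α * 2⁻¹ ^ n := by
      have := ENNReal.rpow_pos (p := α) (ENNReal.pow_pos (a := 2⁻¹) (by simp) n) (by simp)
      exact ENNReal.mul_pos this.ne' (by simp)
    have hev := (hs.prodMap hs).eventually (ENNReal.tendsto_nhds_zero.1 hC _ hpos)
    rw [prod_atTop_atTop_eq] at hev
    obtain ⟨N, hN⟩ := eventually_atTop_prod_self.1 hev
    filter_upwards [eventually_ge_atTop N] with k hk m hm
    exact hN k m hk (hk.trans hm)
  obtain ⟨φ, hφ, hφs⟩ := extraction_forall_of_eventually hfast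
  obtain ⟨g, hg, hlim⟩ := measurable_limit_of_tendsto_metrizable_ae
    (fun n ↦ (hD (s (φ n))).aemeasurable)
    (ae_exists_tendsto_of_lintegral_rpow_le hα (fun n ↦ hD (s (φ n)))
      fun n ↦ hφs n _ (hφ.monotone n.le_succ))
  refine ⟨g, hg, ENNReal.tendsto_nhds_zero.2 fun ε hε ↦ ?_⟩
  filter_upwards [(ENNReal.tendsto_nhds_zero.1 hC ε hε).curry] with i hi
  calc ∫⁻ ω, ‖D i ω - g ω‖ₑ ^ α ∂P
      = ∫⁻ ω, liminf (fun n ↦ ‖D i ω - D (s (φ n)) ω‖ₑ ^ α) atTop ∂P := by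
        refine lintegral_congr_ae (hlim.mono fun ω hω ↦ Eq.symm (Tendsto.liminf_eq ?_))
        exact ((tendsto_const_nhds.sub hω).enorm).ennrpow_const α
    _ ≤ liminf (fun n ↦ ∫⁻ ω, ‖D i ω - D (s (φ n)) ω‖ₑ ^ α ∂P) atTop :=
        lintegral_liminf_le fun n ↦ (((hD i).sub (hD (s (φ n)))).enorm).pow_const α
    _ ≤ ε := liminf_le_of_frequently_le'
        ((hs.comp hφ.tendsto_atTop).eventually hi).frequently

end Moments

section ConvergenceInMeasure

variable {Ω : Type*} [MeasurableSpace Ω] {P : Measure Ω} {ι : Type*} {l : Filter ι}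

lemma tendstoInMeasure_prodMk {X Y : Type*} [PseudoEMetricSpace X] [PseudoEMetricSpace Y]
    {f : ι → Ω → X} {f₀ : Ω → X} {g : ι → Ω → Y} {g₀ : Ω → Y} (hf : TendstoInMeasure P f l f₀)
    (hg : TendstoInMeasure P g l g₀) :
    TendstoInMeasure P (fun i ω ↦ (f i ω, g i ω)) l fun ω ↦ (f₀ ω, g₀ ω) := by
  intro ε hε
  refine tendsto_of_tendsto_of_tendsto_of_le_of_le tendsto_const_nhds
    (by simpa using (hf ε hε).add (hg ε hε)) (fun _ ↦ zero_le) fun i ↦ ?_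
  refine (measure_mono fun ω hω ↦ ?_).trans (measure_union_le _ _)
  simpa [Prod.edist_eq] using hω

lemma tendsto_lintegral_min_one_of_tendstoInMeasure [IsFiniteMeasure P] [l.IsCountablyGenerated]
    {X : Type*} [PseudoEMetricSpace X] {x : ι → Ω → X} {x₀ : Ω → X} {k : X → X → ℝ≥0∞}
    (hk : ∀ y, Tendsto (k y) (𝓝 y) (𝓝 0)) (hm : ∀ i, Measurable fun ω ↦ k (x₀ ω) (x i ω))
    (hx : TendstoInMeasure P x l x₀) :
    Tendsto (fun i ↦ ∫⁻ ω, min 1 (k (x₀ ω) (x i ω)) ∂P) l (𝓝 0) := by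
  refine tendsto_of_subseq_tendsto fun s hs ↦ ?_
  obtain ⟨φ, -, hφ⟩ := (hx.comp hs).exists_seq_tendsto_ae
  refine ⟨φ, ?_⟩
  rw [← lintegral_zero (μ := P)]
  refine tendsto_lintegral_of_dominated_convergence (fun _ ↦ 1)
    (fun n ↦ measurable_const.min (hm (s (φ n)))) (fun n ↦ ae_of_all _ fun ω ↦ min_le_left _ _)
    (by simp) (hφ.mono fun ω hω ↦ ?_)
  simpa using tendsto_const_nhds.min ((hk (x₀ ω)).comp hω)

end ConvergenceInMeasure

section RandomContraction

variable {Ω : Type*} [MeasurableSpace Ω] {P : Measure Ω} {T : Ω → Ω} {ι : Type*} {l : Filter ι}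
  {E : Type*} [NormedAddCommGroup E] [MeasurableSpace E] [BorelSpace E]
  [SecondCountableTopology E] {Λ : Ω → E → E} {β : ℝ≥0∞} {α : ℝ} {D : ι → Ω → E}

lemma cauchy_of_contraction_defect [IsFiniteMeasure P] (hT : MeasurePreserving T P P)
    (hα : 0 < α) (hβ : β < 1) (hΛm : Measurable (Function.uncurry Λ))
    (hΛ : ∀ ω d d', ‖Λ ω d - Λ ω d'‖ₑ ≤ β * ‖d - d'‖ₑ) (hD : ∀ i, Measurable (D i))
    (hρ : Tendsto (fun i ↦ ∫⁻ ω, ‖D i (T ω) - Λ ω (D i ω)‖ₑ ^ α ∂P) l (𝓝 0)) :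
    Tendsto (fun i : ι × ι ↦ ∫⁻ ω, ‖D i.1 ω - D i.2 ω‖ₑ ^ α ∂P) (l ×ˢ l) (𝓝 0) := by
  set ρ : ι → Ω → ℝ≥0∞ := fun i ω ↦ ‖D i (T ω) - Λ ω (D i ω)‖ₑ
  have hρm : ∀ i, Measurable (ρ i) := fun i ↦ (((hD i).comp hT.measurable).sub
    (hΛm.comp (measurable_id.prodMk (hD i)))).enorm
  have hρρ : Tendsto (fun i : ι × ι ↦ ∫⁻ ω, (ρ i.1 ω + ρ i.2 ω) ^ α ∂P) (l ×ˢ l) (𝓝 0) :=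
    tendsto_lintegral_rpow_of_le_add hα.le (fun i ↦ hρm i.1) (.of_forall fun _ ↦ ae_of_all _
      fun _ ↦ le_rfl) (hρ.comp tendsto_fst) (hρ.comp tendsto_snd)
  have hstep : ∀ i j ω, ‖D i (T ω) - D j (T ω)‖ₑ ≤ β * ‖D i ω - D j ω‖ₑ + (ρ i ω + ρ j ω) := by
    intro i j ω
    calc ‖D i (T ω) - D j (T ω)‖ₑ
        = ‖(Λ ω (D i ω) - Λ ω (D j ω)) + (D i (T ω) - Λ ω (D i ω))
            - (D j (T ω) - Λ ω (D j ω))‖ₑ := by congr 1; abel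
      _ ≤ ‖Λ ω (D i ω) - Λ ω (D j ω)‖ₑ + ρ i ω + ρ j ω :=
          enorm_sub_le.trans (by gcongr; exact enorm_add_le _ _)
      _ ≤ β * ‖D i ω - D j ω‖ₑ + (ρ i ω + ρ j ω) := by
          rw [add_assoc]; gcongr; exact hΛ ω _ _
  obtain ⟨b, hb, K, hK, hpow⟩ := exists_rpow_le_mul_rpow_add hα hβ
  have hbound : ∀ i : ι × ι, ∫⁻ ω, ‖D i.1 ω - D i.2 ω‖ₑ ^ α ∂P ≤
      (1 - b)⁻¹ * K * ∫⁻ ω, (ρ i.1 ω + ρ i.2 ω) ^ α ∂P := fun i ↦ by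
    rw [mul_assoc, ← lintegral_const_mul' _ _ hK]
    exact lintegral_le_of_contraction hT (((hD i.1).sub (hD i.2)).enorm.pow_const α)
      (fun ω ↦ ENNReal.rpow_ne_top_of_nonneg hα.le enorm_ne_top) hb
      (ae_of_all _ fun ω ↦ hpow _ _ _ (hstep i.1 i.2 ω))
  have hconst : (1 - b)⁻¹ * K ≠ ⊤ :=
    ENNReal.mul_ne_top (ENNReal.inv_ne_top.2 (tsub_pos_of_lt hb).ne') hK
  refine tendsto_of_tendsto_of_tendsto_of_le_of_le tendsto_const_nhds
    (by simpa using ENNReal.Tendsto.const_mul hρρ (.inr hconst)) (fun _ ↦ zero_le) hbound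

lemma ae_eq_of_tendsto_contraction_defect [l.NeBot] (hT : MeasurePreserving T P P)
    (hα : 0 < α) (hβ : β ≠ ⊤) (hΛm : Measurable (Function.uncurry Λ))
    (hΛ : ∀ ω d d', ‖Λ ω d - Λ ω d'‖ₑ ≤ β * ‖d - d'‖ₑ) (hD : ∀ i, Measurable (D i))
    (hρ : Tendsto (fun i ↦ ∫⁻ ω, ‖D i (T ω) - Λ ω (D i ω)‖ₑ ^ α ∂P) l (𝓝 0)) {g : Ω → E}
    (hg : Measurable g) (hDg : Tendsto (fun i ↦ ∫⁻ ω, ‖D i ω - g ω‖ₑ ^ α ∂P) l (𝓝 0)) :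
    ∀ᵐ ω ∂P, g (T ω) = Λ ω (g ω) := by
  have hDgm : ∀ i, Measurable fun ω ↦ ‖D i ω - g ω‖ₑ := fun i ↦ ((hD i).sub hg).enorm
  have hΛg : Measurable fun ω ↦ Λ ω (g ω) := hΛm.comp (measurable_id.prodMk hg)
  have hDgT : Tendsto (fun i ↦ ∫⁻ ω, ‖D i (T ω) - g (T ω)‖ₑ ^ α ∂P) l (𝓝 0) :=
    hDg.congr fun i ↦ (hT.lintegral_comp ((hDgm i).pow_const α)).symm
  have hDgΛ : Tendsto (fun i ↦ ∫⁻ ω, (β * ‖D i ω - g ω‖ₑ) ^ α ∂P) l (𝓝 0) := by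
    have hβα : β ^ α ≠ ⊤ := ENNReal.rpow_ne_top_of_nonneg hα.le hβ
    simp_rw [ENNReal.mul_rpow_of_nonneg _ _ hα.le, lintegral_const_mul' _ _ hβα]
    simpa using ENNReal.Tendsto.const_mul hDg (.inr hβα)
  have hle : ∀ i ω, ‖g (T ω) - Λ ω (g ω)‖ₑ ≤
      ‖D i (T ω) - g (T ω)‖ₑ + (β * ‖D i ω - g ω‖ₑ + ‖D i (T ω) - Λ ω (D i ω)‖ₑ) := by
    intro i ω
    calc ‖g (T ω) - Λ ω (g ω)‖ₑ
        = ‖(Λ ω (D i ω) - Λ ω (g ω)) + (D i (T ω) - Λ ω (D i ω))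
            - (D i (T ω) - g (T ω))‖ₑ := by congr 1; abel
      _ ≤ ‖Λ ω (D i ω) - Λ ω (g ω)‖ₑ + ‖D i (T ω) - Λ ω (D i ω)‖ₑ + ‖D i (T ω) - g (T ω)‖ₑ :=
          enorm_sub_le.trans (by gcongr; exact enorm_add_le _ _)
      _ ≤ _ := by rw [add_comm]; gcongr; exact hΛ ω _ _
  have hzero : Tendsto (fun _ : ι ↦ ∫⁻ ω, ‖g (T ω) - Λ ω (g ω)‖ₑ ^ α ∂P) l (𝓝 0) :=
    tendsto_lintegral_rpow_of_le_add hα.le (fun i ↦ (hDgm i).comp hT.measurable)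
      (.of_forall fun i ↦ ae_of_all _ (hle i)) hDgT
      (tendsto_lintegral_rpow_of_le_add hα.le (fun i ↦ (hDgm i).const_mul β)
        (.of_forall fun _ ↦ ae_of_all _ fun _ ↦ le_rfl) hDgΛ hρ)
  have hae := ENNReal.ae_eq_zero_of_lintegral_rpow_eq_zero hα.le
    ((hg.comp hT.measurable).sub hΛg).enorm.aemeasurable
    (tendsto_nhds_unique tendsto_const_nhds hzero)
  filter_upwards [hae] with ω hω
  exact sub_eq_zero.1 (enorm_eq_zero.1 hω)

theorem exists_fixed_process_of_contraction_defect [IsFiniteMeasure P] [CompleteSpace E] [l.NeBot]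
    [l.IsCountablyGenerated] (hT : MeasurePreserving T P P) (hα : 0 < α) (hβ : β < 1)
    (hΛm : Measurable (Function.uncurry Λ))
    (hΛ : ∀ ω d d', ‖Λ ω d - Λ ω d'‖ₑ ≤ β * ‖d - d'‖ₑ) (hD : ∀ i, Measurable (D i))
    (hρ : Tendsto (fun i ↦ ∫⁻ ω, ‖D i (T ω) - Λ ω (D i ω)‖ₑ ^ α ∂P) l (𝓝 0)) :
    ∃ g : Ω → E, Measurable g ∧ (∀ᵐ ω ∂P, g (T ω) = Λ ω (g ω)) ∧
      Tendsto (fun i ↦ ∫⁻ ω, ‖D i ω - g ω‖ₑ ^ α ∂P) l (𝓝 0) := by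
  obtain ⟨g, hg, hDg⟩ := exists_tendsto_lintegral_rpow_of_cauchy hα hD
    (cauchy_of_contraction_defect hT hα hβ hΛm hΛ hD hρ)
  exact ⟨g, hg, ae_eq_of_tendsto_contraction_defect hT hα hβ.ne_top hΛm hΛ hD hρ hg hDg, hDg⟩

end RandomContraction

section TimeDerivative

variable {Ω : Type*} [MeasurableSpace Ω] {P : Measure Ω} {p : ℝ} {E : Type*}
  [NormedAddCommGroup E]

lemma pMoment_norm (f : Ω → E) :
    pMoment P p (fun ω ↦ ‖f ω‖) = (∫⁻ ω, ‖f ω‖ₑ ^ p ∂P) ^ (1 / p) := by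
  simp_rw [pMoment, ofReal_norm]

lemma tendsto_pMoment_norm_iff (hp : 0 < p) {ι : Type*} {l : Filter ι} {f : ι → Ω → E} :
    Tendsto (fun i ↦ pMoment P p fun ω ↦ ‖f i ω‖) l (𝓝 0) ↔
      Tendsto (fun i ↦ ∫⁻ ω, ‖f i ω‖ₑ ^ p ∂P) l (𝓝 0) := by
  simp_rw [pMoment_norm, one_div]
  refine ⟨fun h ↦ ?_, fun h ↦ ?_⟩
  · simpa [ENNReal.rpow_inv_rpow hp.ne', ENNReal.zero_rpow_of_pos, hp] using h.ennrpow_const p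
  · simpa [ENNReal.zero_rpow_of_pos, hp] using h.ennrpow_const p⁻¹

lemma tendsto_lintegral_rpow_of_pMoment_le (hp : 0 < p) {g : ℝ → Ω → E} {u δ C : ℝ} (hδ : 0 < δ)
    (h : ∀ v ∈ Metric.ball u δ,
      pMoment P p (fun ω ↦ ‖g v ω - g u ω‖) ≤ ENNReal.ofReal (C * |v - u|)) :
    Tendsto (fun Δ ↦ ∫⁻ ω, ‖g (u + Δ) ω - g u ω‖ₑ ^ p ∂P) (𝓝[≠] 0) (𝓝 0) := by
  rw [← tendsto_pMoment_norm_iff hp]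
  have hlim : Tendsto (fun Δ : ℝ ↦ ENNReal.ofReal (C * |Δ|)) (𝓝[≠] 0) (𝓝 0) := by
    have hcont : Continuous fun Δ : ℝ ↦ ENNReal.ofReal (C * |Δ|) :=
      ENNReal.continuous_ofReal.comp (by fun_prop)
    simpa using (hcont.tendsto 0).mono_left nhdsWithin_le_nhds
  refine tendsto_of_tendsto_of_tendsto_of_le_of_le' tendsto_const_nhds hlim
    (.of_forall fun _ ↦ zero_le) ?_
  filter_upwards [mem_nhdsWithin_of_mem_nhds (Metric.ball_mem_nhds 0 hδ)] with Δ hΔ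
  simpa using h (u + Δ) (by simpa using hΔ)

variable [NormedSpace ℝ E]

lemma pMoment_norm_smul (hp : 0 < p) (c : ℝ) (f : Ω → E) :
    pMoment P p (fun ω ↦ ‖c • f ω‖) = ‖c‖ₑ * pMoment P p fun ω ↦ ‖f ω‖ := by
  have hc : ‖c‖ₑ ^ p ≠ ⊤ := ENNReal.rpow_ne_top_of_nonneg hp.le enorm_ne_top
  simp_rw [pMoment_norm, enorm_smul, ENNReal.mul_rpow_of_nonneg _ _ hp.le,
    lintegral_const_mul' _ _ hc]
  rw [ENNReal.mul_rpow_of_nonneg _ _ (by positivity), one_div, ENNReal.rpow_rpow_inv hp.ne']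

/-- The difference quotient at `u` of the process `v ↦ g v`, with increment `Δ`. -/
def diffQuot (g : ℝ → Ω → E) (u Δ : ℝ) (ω : Ω) : E := Δ⁻¹ • (g (u + Δ) ω - g u ω)

lemma eventually_ae_diffQuot_comp_eq {T : Ω → Ω} {f g : ℝ → Ω → E} {u : ℝ}
    (h : ∀ᶠ v in 𝓝 u, ∀ᵐ ω ∂P, g v (T ω) = f v ω) :
    ∀ᶠ Δ in 𝓝[≠] (0 : ℝ), ∀ᵐ ω ∂P, diffQuot g u Δ (T ω) = diffQuot f u Δ ω := by
  have hshift : Tendsto (fun Δ : ℝ ↦ u + Δ) (𝓝[≠] 0) (𝓝 u) := by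
    have hcont : Continuous fun Δ : ℝ ↦ u + Δ := by fun_prop
    simpa using (hcont.tendsto 0).mono_left nhdsWithin_le_nhds
  filter_upwards [hshift.eventually h] with Δ hΔ
  filter_upwards [hΔ, h.self_of_nhds] with ω hω hω₀
  rw [diffQuot, diffQuot, hω, hω₀]

/-- `g'` is the derivative at time `u` of the process `v ↦ g v` in the `L_p` sense, written with the
moments `pMoment` so that it also makes sense for `p < 1`. -/
def IsTimeDeriv (P : Measure Ω) (p : ℝ) (g : ℝ → Ω → E) (g' : Ω → E) (u : ℝ) : Prop :=
  Tendsto (fun Δ : ℝ ↦ pMoment P p (fun ω ↦ ‖g (u + Δ) ω - g u ω - Δ • g' ω‖) /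
    ENNReal.ofReal |Δ|) (𝓝[≠] 0) (𝓝 0)

lemma isTimeDeriv_iff (hp : 0 < p) {g : ℝ → Ω → E} {g' : Ω → E} {u : ℝ} :
    IsTimeDeriv P p g g' u ↔
      Tendsto (fun Δ ↦ ∫⁻ ω, ‖diffQuot g u Δ ω - g' ω‖ₑ ^ p ∂P) (𝓝[≠] 0) (𝓝 0) := by
  rw [← tendsto_pMoment_norm_iff hp]
  refine tendsto_congr' (eventually_mem_nhdsWithin.mono fun Δ (hΔ : Δ ≠ 0) ↦ ?_)
  have hquot : ∀ ω, diffQuot g u Δ ω - g' ω = Δ⁻¹ • (g (u + Δ) ω - g u ω - Δ • g' ω) := fun ω ↦ by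
    rw [diffQuot, smul_sub Δ⁻¹ _ (Δ • g' ω), inv_smul_smul₀ hΔ]
  simp_rw [hquot, pMoment_norm_smul hp, enorm_inv hΔ, Real.enorm_eq_ofReal_abs,
    ENNReal.div_eq_inv_mul]

variable [MeasurableSpace E] [BorelSpace E] [SecondCountableTopology E]

lemma measurable_diffQuot {g : ℝ → Ω → E} (hg : ∀ v, Measurable (g v)) (u Δ : ℝ) :
    Measurable (diffQuot g u Δ) :=
  ((hg (u + Δ)).sub (hg u)).const_smul Δ⁻¹

lemma IsTimeDeriv.comp (hp : 0 < p) {S : Ω → Ω} (hS : MeasurePreserving S P P) {g : ℝ → Ω → E}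
    {g' : Ω → E} {u : ℝ} (hg : ∀ v, Measurable (g v)) (hg' : Measurable g')
    (h : IsTimeDeriv P p g g' u) : IsTimeDeriv P p (fun v ↦ g v ∘ S) (g' ∘ S) u := by
  rw [isTimeDeriv_iff hp] at h ⊢
  exact h.congr fun Δ ↦ (hS.lintegral_comp
    (((measurable_diffQuot hg u Δ).sub hg').enorm.pow_const p)).symm

end TimeDerivative

section Exponents

variable {p q r α : ℝ}

lemma mul_rpow_eq_rpow_mul_rpow_of_inv_eq (hp : p ≠ 0) (hq : q ≠ 0) (hα : 0 < α) (x y : ℝ≥0∞) :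
    (x ^ r * y) ^ α = (x ^ p) ^ (r * α / p) * (y ^ q) ^ (α / q) := by
  rw [ENNReal.mul_rpow_of_nonneg _ _ hα.le]
  simp_rw [← ENNReal.rpow_mul]
  congr 2 <;> field_simp

lemma mul_div_add_div_eq_one_of_inv_eq (hα : 0 < α) (h : α⁻¹ = r / p + q⁻¹) :
    r * α / p + α / q = 1 :=
  calc r * α / p + α / q = α * (r / p + q⁻¹) := by ring
    _ = 1 := by rw [← h, mul_inv_cancel₀ hα.ne']

lemma mul_rpow_le_rpow_add_rpow (hp : 0 < p) (hq : 0 < q) (hr : 0 ≤ r) (hα : 0 < α)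
    (h : α⁻¹ = r / p + q⁻¹) (x y : ℝ≥0∞) : (x ^ r * y) ^ α ≤ x ^ p + y ^ q := by
  rw [mul_rpow_eq_rpow_mul_rpow_of_inv_eq hp.ne' hq.ne' hα]
  exact rpow_mul_rpow_le_add (by positivity) (by positivity)
    (mul_div_add_div_eq_one_of_inv_eq hα h) _ _

variable {Ω : Type*} [MeasurableSpace Ω] {P : Measure Ω} {ι : Type*} {l : Filter ι}

lemma eventuallyUI_mul_rpow (hp : 0 < p) (hq : 0 < q) (hr : 0 ≤ r) (hα : 0 < α)
    (h : α⁻¹ = r / p + q⁻¹) {x y : ι → Ω → ℝ≥0∞} (hxm : ∀ i, Measurable (x i))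
    (hx : EventuallyUI P l fun i ω ↦ x i ω ^ p) (hy : EventuallyUI P l fun i ω ↦ y i ω ^ q) :
    EventuallyUI P l fun i ω ↦ (x i ω ^ r * y i ω) ^ α :=
  (hx.add hy fun i ↦ (hxm i).pow_const p).mono
    (.of_forall fun _ ↦ ae_of_all _ fun _ ↦ mul_rpow_le_rpow_add_rpow hp hq hr hα h _ _)

lemma tendsto_lintegral_mul_rpow (hp : 0 < p) (hq : 0 < q) (hr : 0 ≤ r) (hα : 0 < α)
    (h : α⁻¹ = r / p + q⁻¹) {x : Ω → ℝ≥0∞} {y : ι → Ω → ℝ≥0∞} (hxm : Measurable x)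
    (hym : ∀ i, Measurable (y i)) (hx : ∫⁻ ω, x ω ^ p ∂P ≠ ⊤)
    (hy : Tendsto (fun i ↦ ∫⁻ ω, y i ω ^ q ∂P) l (𝓝 0)) :
    Tendsto (fun i ↦ ∫⁻ ω, (x ω ^ r * y i ω) ^ α ∂P) l (𝓝 0) := by
  have hlim : Tendsto (fun i ↦ (∫⁻ ω, x ω ^ p ∂P) ^ (r * α / p) *
      (∫⁻ ω, y i ω ^ q ∂P) ^ (α / q)) l (𝓝 0) := by
    have hpow := hy.ennrpow_const (α / q)
    rw [ENNReal.zero_rpow_of_pos (by positivity)] at hpow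
    simpa using ENNReal.Tendsto.const_mul hpow
      (.inr (ENNReal.rpow_ne_top_of_nonneg (by positivity) hx))
  refine tendsto_of_tendsto_of_tendsto_of_le_of_le tendsto_const_nhds hlim
    (fun _ ↦ zero_le) fun i ↦ ?_
  simp_rw [mul_rpow_eq_rpow_mul_rpow_of_inv_eq hp.ne' hq.ne' hα]
  exact ENNReal.lintegral_mul_norm_pow_le (hxm.pow_const p).aemeasurable
    ((hym i).pow_const q).aemeasurable (by positivity) (by positivity)
    (mul_div_add_div_eq_one_of_inv_eq hα h)

end Exponents

section RelativeRemainder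

variable {X V : Type*} [NormedAddCommGroup X] [NormedSpace ℝ X] [NormedAddCommGroup V]
  [NormedSpace ℝ V] {G : X → V}

/-- Relative error of the first-order expansion of `G` at `x`, evaluated at `x'`. It vanishes at
`x' = x`, where it is `0 / 0`. -/
def relRem (G : X → V) (x x' : X) : ℝ≥0∞ :=
  ‖G x' - G x - fderiv ℝ G x (x' - x)‖ₑ / ‖x' - x‖ₑ

lemma tendsto_relRem {x : X} (hG : DifferentiableAt ℝ G x) :
    Tendsto (relRem G x) (𝓝 x) (𝓝 0) := by
  have hlim := ENNReal.tendsto_ofReal (hasFDerivAt_iff_tendsto.1 hG.hasFDerivAt)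
  rw [ENNReal.ofReal_zero] at hlim
  refine hlim.congr fun x' ↦ ?_
  rcases eq_or_ne x' x with rfl | hx
  · simp [relRem]
  · rw [relRem, ENNReal.ofReal_mul (by positivity),
      ENNReal.ofReal_inv_of_pos (norm_pos_iff.2 (sub_ne_zero.2 hx)), ofReal_norm, ofReal_norm,
      ENNReal.div_eq_inv_mul]

lemma enorm_smul_sub_fderiv (c : ℝ) (x x' : X) :
    ‖c • (G x' - G x) - fderiv ℝ G x (c • (x' - x))‖ₑ = relRem G x x' * ‖c • (x' - x)‖ₑ := by
  have hrem : ‖G x' - G x - fderiv ℝ G x (x' - x)‖ₑ = relRem G x x' * ‖x' - x‖ₑ := by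
    refine (ENNReal.div_mul_cancel' (fun h ↦ ?_) fun h ↦ absurd h enorm_ne_top).symm
    obtain rfl := sub_eq_zero.1 (enorm_eq_zero.1 h)
    simp
  rw [map_smul, ← smul_sub, enorm_smul, enorm_smul, hrem, mul_left_comm]

variable [MeasurableSpace X] [BorelSpace X] [SecondCountableTopology X] [MeasurableSpace V]
  [BorelSpace V] [CompleteSpace V]

lemma measurable_fderiv_uncurry (hG : Differentiable ℝ G) :
    Measurable fun y : X × X ↦ fderiv ℝ G y.1 y.2 := by
  simp_rw [← fun y : X × X ↦ (hG y.1).lineDeriv_eq_fderiv (v := y.2)]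
  exact measurable_lineDeriv_uncurry hG.continuous

lemma measurable_relRem [SecondCountableTopology V] (hG : Differentiable ℝ G) {Ω : Type*}
    [MeasurableSpace Ω] {x x' : Ω → X} (hx : Measurable x) (hx' : Measurable x') :
    Measurable fun ω ↦ relRem G (x ω) (x' ω) := by
  have hGm : Measurable G := hG.continuous.measurable
  have hlin : Measurable fun ω ↦ fderiv ℝ G (x ω) (x' ω - x ω) :=
    (measurable_fderiv_uncurry hG).comp (hx.prodMk (hx'.sub hx))
  exact (((hGm.comp hx').sub (hGm.comp hx)).sub hlin).enorm.div (hx'.sub hx).enorm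

lemma tendsto_lintegral_min_one_relRem_rpow [SecondCountableTopology V] (hG : Differentiable ℝ G)
    {Ω : Type*} [MeasurableSpace Ω] {P : Measure Ω} [IsFiniteMeasure P] {ι : Type*}
    {l : Filter ι} [l.IsCountablyGenerated] {α : ℝ} (hα : 0 < α) {x : ι → Ω → X} {x₀ : Ω → X}
    (hx : ∀ i, Measurable (x i)) (hx₀ : Measurable x₀) (h : TendstoInMeasure P x l x₀) :
    Tendsto (fun i ↦ ∫⁻ ω, min 1 (relRem G (x₀ ω) (x i ω) ^ α) ∂P) l (𝓝 0) := by
  refine tendsto_lintegral_min_one_of_tendstoInMeasure (k := fun x x' ↦ relRem G x x' ^ α)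
    (fun y ↦ ?_) (fun i ↦ (measurable_relRem hG hx₀ (hx i)).pow_const α) h
  simpa [ENNReal.zero_rpow_of_pos hα] using (tendsto_relRem (hG y)).ennrpow_const α

end RelativeRemainder

section GrowthLipschitz

variable {W Z V : Type*} [NormedAddCommGroup W] [NormedAddCommGroup Z] [NormedAddCommGroup V]
  {C β r : ℝ} {G : W × Z → V}

/-- `G (w, z)` is `β`-Lipschitz in `z`, and Lipschitz in `w` with a constant growing like the
`r`-th power of the norm. -/
def GrowthLipschitz (C β r : ℝ) (G : W × Z → V) : Prop :=
  ∀ (w w' : W) (z z' : Z),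
    ‖G (w, z) - G (w', z')‖ ≤ C * (1 + ‖w‖ ^ r + ‖w'‖ ^ r) * ‖w - w'‖ + β * ‖z - z'‖

/-- The size whose `r`-th power controls the local Lipschitz constant of a `GrowthLipschitz` map
between `w` and `w'`. It is at least `1`. -/
def growth (w w' : W) : ℝ≥0∞ := 1 + max ‖w‖ₑ ‖w'‖ₑ

lemma one_le_growth_rpow (hr : 0 ≤ r) (w w' : W) : 1 ≤ growth w w' ^ r := by
  simpa using ENNReal.rpow_le_rpow (show 1 ≤ growth w w' from le_self_add) hr

lemma growth_self_le (w w' : W) : growth w w ≤ growth w w' := by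
  simp [growth]

lemma continuous_growth (w : W) : Continuous (growth w) := by
  unfold growth
  fun_prop

lemma measurable_growth [MeasurableSpace W] [OpensMeasurableSpace W] {Ω : Type*}
    [MeasurableSpace Ω] {w w' : Ω → W} (hw : Measurable w) (hw' : Measurable w') :
    Measurable fun ω ↦ growth (w ω) (w' ω) :=
  measurable_const.add (hw.enorm.max hw'.enorm)

lemma growth_le_one_add (w w' : W) : growth w w' ≤ 1 + (‖w‖ₑ + ‖w'‖ₑ) := by
  unfold growth
  gcongr
  exact max_le le_self_add le_add_self

lemma lintegral_growth_self_rpow_ne_top {Ω : Type*} [MeasurableSpace Ω] {P : Measure Ω}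
    [IsFiniteMeasure P] {p : ℝ} (hp : 0 ≤ p) {w : Ω → W} (hw : ∫⁻ ω, ‖w ω‖ₑ ^ p ∂P ≠ ⊤) :
    ∫⁻ ω, growth (w ω) (w ω) ^ p ∂P ≠ ⊤ := by
  have hle : ∀ ω, growth (w ω) (w ω) ^ p ≤ 2 ^ p * (1 + ‖w ω‖ₑ ^ p) := fun ω ↦ by
    simpa [growth] using ENNReal.add_rpow_le_two_rpow_mul_rpow_add_rpow 1 ‖w ω‖ₑ hp
  refine ne_top_of_le_ne_top ?_ (lintegral_mono hle)
  rw [lintegral_const_mul' _ _ (by finiteness), lintegral_add_left measurable_const]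
  simp only [lintegral_const, one_mul]
  finiteness

lemma eventuallyUI_growth_rpow [MeasurableSpace W] [OpensMeasurableSpace W] {Ω : Type*}
    [MeasurableSpace Ω] {P : Measure Ω} [IsFiniteMeasure P] {ι : Type*} {l : Filter ι} {p : ℝ}
    (hp : 0 ≤ p) {w : Ω → W} {w' : ι → Ω → W} (hw : Measurable w)
    (hwp : ∫⁻ ω, ‖w ω‖ₑ ^ p ∂P ≠ ⊤)
    (h : Tendsto (fun i ↦ ∫⁻ ω, ‖w' i ω - w ω‖ₑ ^ p ∂P) l (𝓝 0)) :
    EventuallyUI P l fun i ω ↦ growth (w ω) (w' i ω) ^ p := by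
  have hsum : EventuallyUI P l fun i ω ↦ (1 + (‖w ω‖ₑ + ‖w' i ω‖ₑ)) ^ p :=
    (EventuallyUI.const measurable_const (by simp)).add_rpow hp
      ((EventuallyUI.const (by fun_prop) hwp).add_rpow hp (.enorm_rpow_of_tendsto hp hw hwp h)
        fun _ ↦ hw.enorm) fun _ ↦ measurable_const
  exact hsum.mono (.of_forall fun _ ↦ ae_of_all _ fun _ ↦
    ENNReal.rpow_le_rpow (growth_le_one_add _ _) hp)

lemma ofReal_one_add_norm_rpow_le (hr : 0 ≤ r) (w w' : W) :
    ENNReal.ofReal (1 + ‖w‖ ^ r + ‖w'‖ ^ r) ≤ 3 * growth w w' ^ r := by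
  rw [ENNReal.ofReal_add (by positivity) (by positivity),
    ENNReal.ofReal_add (by positivity) (by positivity), ENNReal.ofReal_one,
    ← ENNReal.ofReal_rpow_of_nonneg (norm_nonneg _) hr,
    ← ENNReal.ofReal_rpow_of_nonneg (norm_nonneg _) hr, ofReal_norm, ofReal_norm]
  calc 1 + ‖w‖ₑ ^ r + ‖w'‖ₑ ^ r ≤ growth w w' ^ r + growth w w' ^ r + growth w w' ^ r := by
        gcongr
        · exact one_le_growth_rpow hr w w'
        · exact (le_max_left _ _).trans le_add_self
        · exact (le_max_right _ _).trans le_add_self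
    _ = 3 * growth w w' ^ r := by ring

namespace GrowthLipschitz

lemma enorm_sub_le (hG : GrowthLipschitz C β r G) (hr : 0 ≤ r) (w w' : W) (z z' : Z) :
    ‖G (w', z') - G (w, z)‖ₑ ≤
      3 * ENNReal.ofReal C * (growth w w' ^ r * ‖w' - w‖ₑ) + ENNReal.ofReal β * ‖z' - z‖ₑ := by
  have hle := ENNReal.ofReal_le_ofReal ((hG w w' z z').trans_eq
    (by rw [norm_sub_rev w, norm_sub_rev z]))
  rw [ofReal_norm, enorm_sub_rev] at hle
  refine hle.trans (ENNReal.ofReal_add_le.trans ?_)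
  rw [ENNReal.ofReal_mul' (norm_nonneg _), ENNReal.ofReal_mul' (norm_nonneg _),
    ENNReal.ofReal_mul' (by positivity), ofReal_norm, ofReal_norm]
  refine add_le_add ?_ le_rfl
  calc ENNReal.ofReal C * ENNReal.ofReal (1 + ‖w‖ ^ r + ‖w'‖ ^ r) * ‖w' - w‖ₑ
      ≤ ENNReal.ofReal C * (3 * growth w w' ^ r) * ‖w' - w‖ₑ := by
        gcongr; exact ofReal_one_add_norm_rpow_le hr w w'
    _ = 3 * ENNReal.ofReal C * (growth w w' ^ r * ‖w' - w‖ₑ) := by ring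

variable [NormedSpace ℝ W] [NormedSpace ℝ Z] [NormedSpace ℝ V]

lemma enorm_smul_sub_le (hG : GrowthLipschitz C β r G) (hr : 0 ≤ r) (c : ℝ) (w w' : W)
    (z z' : Z) :
    ‖c • (G (w', z') - G (w, z))‖ₑ ≤ 3 * ENNReal.ofReal C * (growth w w' ^ r * ‖c • (w' - w)‖ₑ) +
      ENNReal.ofReal β * ‖c • (z' - z)‖ₑ := by
  simp_rw [enorm_smul]
  calc ‖c‖ₑ * ‖G (w', z') - G (w, z)‖ₑ
      ≤ ‖c‖ₑ * (3 * ENNReal.ofReal C * (growth w w' ^ r * ‖w' - w‖ₑ) +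
          ENNReal.ofReal β * ‖z' - z‖ₑ) := by gcongr; exact hG.enorm_sub_le hr w w' z z'
    _ = _ := by ring

lemma enorm_fderiv_apply_le (hG : GrowthLipschitz C β r G) (hr : 0 ≤ r) {w : W} {z : Z}
    (hd : DifferentiableAt ℝ G (w, z)) (e : W) (d : Z) :
    ‖fderiv ℝ G (w, z) (e, d)‖ₑ ≤
      3 * ENNReal.ofReal C * (growth w w ^ r * ‖e‖ₑ) + ENNReal.ofReal β * ‖d‖ₑ := by
  have hslope := (hd.hasFDerivAt.hasLineDerivAt (e, d)).tendsto_slope_zero.enorm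
  have hgrowth : Tendsto (fun t : ℝ ↦ growth w (w + t • e) ^ r) (𝓝[≠] 0) (𝓝 (growth w w ^ r)) := by
    have hcont : Continuous fun t : ℝ ↦ growth w (w + t • e) :=
      (continuous_growth w).comp (by fun_prop)
    simpa using ((hcont.tendsto 0).mono_left nhdsWithin_le_nhds).ennrpow_const r
  have hbound := (ENNReal.Tendsto.const_mul (a := 3 * ENNReal.ofReal C)
    (ENNReal.Tendsto.mul_const hgrowth (b := ‖e‖ₑ) (.inr enorm_ne_top))
    (.inr (by finiteness))).add_const (ENNReal.ofReal β * ‖d‖ₑ)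
  refine le_of_tendsto_of_tendsto hslope hbound ?_
  filter_upwards [self_mem_nhdsWithin] with t (ht : t ≠ 0)
  simpa [inv_smul_smul₀ ht] using hG.enorm_smul_sub_le hr t⁻¹ w (w + t • e) z (z + t • d)

lemma enorm_fderiv_sub_fderiv_right_le (hG : GrowthLipschitz C β r G) (hr : 0 ≤ r) {w : W} {z : Z}
    (hd : DifferentiableAt ℝ G (w, z)) (e : W) (d d' : Z) :
    ‖fderiv ℝ G (w, z) (e, d) - fderiv ℝ G (w, z) (e, d')‖ₑ ≤ ENNReal.ofReal β * ‖d - d'‖ₑ := by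
  simpa [← map_sub] using hG.enorm_fderiv_apply_le hr hd 0 (d - d')

lemma enorm_fderiv_sub_fderiv_left_le (hG : GrowthLipschitz C β r G) (hr : 0 ≤ r) {w : W} {z : Z}
    (hd : DifferentiableAt ℝ G (w, z)) (e e' : W) (d : Z) :
    ‖fderiv ℝ G (w, z) (e, d) - fderiv ℝ G (w, z) (e', d)‖ₑ ≤
      3 * ENNReal.ofReal C * (growth w w ^ r * ‖e - e'‖ₑ) := by
  simpa [← map_sub] using hG.enorm_fderiv_apply_le hr hd (e - e') 0

lemma enorm_smul_sub_fderiv_le (hG : GrowthLipschitz C β r G) (hr : 0 ≤ r) {w : W} {z : Z}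
    (hd : DifferentiableAt ℝ G (w, z)) (c : ℝ) (w' : W) (z' : Z) :
    ‖c • (G (w', z') - G (w, z)) - fderiv ℝ G (w, z) (c • (w' - w), c • (z' - z))‖ₑ ≤
      min 1 (relRem G (w, z) (w', z')) * ((6 * ENNReal.ofReal C + 2 * ENNReal.ofReal β + 1) *
        (growth w w' ^ r * ‖c • (w' - w)‖ₑ + ‖c • (z' - z)‖ₑ)) := by
  set A := growth w w' ^ r * ‖c • (w' - w)‖ₑ
  set B := ‖c • (z' - z)‖ₑ
  set K := 6 * ENNReal.ofReal C + 2 * ENNReal.ofReal β + 1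
  have htrivial : ‖c • (G (w', z') - G (w, z)) -
      fderiv ℝ G (w, z) (c • (w' - w), c • (z' - z))‖ₑ ≤ K * (A + B) := by
    have hA : growth w w ^ r * ‖c • (w' - w)‖ₑ ≤ A :=
      mul_le_mul_left (ENNReal.rpow_le_rpow (growth_self_le w w') hr) _
    calc _ ≤ (3 * ENNReal.ofReal C * A + ENNReal.ofReal β * B) +
          (3 * ENNReal.ofReal C * A + ENNReal.ofReal β * B) := by
          refine _root_.enorm_sub_le.trans (add_le_add (hG.enorm_smul_sub_le hr c w w' z z') ?_)
          refine (hG.enorm_fderiv_apply_le hr hd _ _).trans ?_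
          gcongr
      _ = 6 * ENNReal.ofReal C * A + 2 * ENNReal.ofReal β * B := by ring
      _ ≤ K * A + K * B := by
          gcongr
          · exact le_add_right le_self_add
          · exact le_add_right le_add_self
      _ = K * (A + B) := (mul_add _ _ _).symm
  rcases min_choice 1 (relRem G (w, z) (w', z')) with h | h
  · rwa [h, one_mul]
  · have hAB : ‖c • ((w', z') - (w, z))‖ₑ ≤ A + B :=
      max_le (le_add_right (le_mul_of_one_le_left zero_le (one_le_growth_rpow hr w w')))
        le_add_self
    rw [h]
    refine (enorm_smul_sub_fderiv (G := G) c (w, z) (w', z')).trans_le ?_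
    gcongr
    exact hAB.trans (le_mul_of_one_le_left zero_le le_add_self)

end GrowthLipschitz

end GrowthLipschitz

section Recursion

variable {Ω : Type*} [MeasurableSpace Ω] {P : Measure Ω} [IsFiniteMeasure P] {T : Ω → Ω}
  {W Z : Type*} [NormedAddCommGroup W] [NormedSpace ℝ W] [NormedAddCommGroup Z] [NormedSpace ℝ Z]
  {p q r α C β u : ℝ} {G : W × Z → Z} {gW : ℝ → Ω → W} {gZ : ℝ → Ω → Z} {gdW : Ω → W}

lemma eventuallyUI_diffQuot_of_recursion [MeasurableSpace Z] [BorelSpace Z]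
    [SecondCountableTopology Z] (hα : 0 < α) (hr : 0 ≤ r) (hβ : β < 1)
    (hG : GrowthLipschitz C β r G) (hT : MeasurePreserving T P P) (hgZ : ∀ v, Measurable (gZ v))
    (hrec : ∀ᶠ v in 𝓝 u, ∀ᵐ ω ∂P, gZ v (T ω) = G (gW v ω, gZ v ω))
    (hforce : EventuallyUI P (𝓝[≠] 0) fun Δ ω ↦
      (growth (gW u ω) (gW (u + Δ) ω) ^ r * ‖diffQuot gW u Δ ω‖ₑ) ^ α) :
    EventuallyUI P (𝓝[≠] 0) fun Δ ω ↦ ‖diffQuot gZ u Δ ω‖ₑ ^ α := by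
  obtain ⟨b, hb, K, hK, hpow⟩ := exists_rpow_le_mul_rpow_add hα (ENNReal.ofReal_lt_one.2 hβ)
  have hC : (3 * ENNReal.ofReal C) ^ α ≠ ⊤ := by finiteness
  refine ((hforce.const_mul hC).const_mul hK).of_contraction hT
    (fun Δ ↦ (measurable_diffQuot hgZ u Δ).enorm.pow_const α) (fun Δ ω ↦ by finiteness) hb ?_
  filter_upwards [eventually_ae_diffQuot_comp_eq hrec] with Δ hΔ
  filter_upwards [hΔ] with ω hω
  rw [hω, ← ENNReal.mul_rpow_of_nonneg _ _ hα.le]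
  exact hpow _ _ _ ((hG.enorm_smul_sub_le hr _ _ _ _ _).trans_eq (add_comm _ _))

lemma tendsto_lintegral_fderiv_sub_left [MeasurableSpace W] [BorelSpace W]
    [SecondCountableTopology W] {ι : Type*} {l : Filter ι} (hp : 0 < p) (hq : 0 < q) (hr : 0 ≤ r)
    (hα : 0 < α) (hαpq : α⁻¹ = r / p + q⁻¹) (hG : GrowthLipschitz C β r G)
    (hGd : Differentiable ℝ G) {w : Ω → W} (hw : Measurable w) (hwp : ∫⁻ ω, ‖w ω‖ₑ ^ p ∂P ≠ ⊤)
    (z : Ω → Z) {e : ι → Ω → W} (he : ∀ i, Measurable (e i)) {e₀ : Ω → W} (he₀ : Measurable e₀)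
    (h : Tendsto (fun i ↦ ∫⁻ ω, ‖e i ω - e₀ ω‖ₑ ^ q ∂P) l (𝓝 0)) (d : ι → Ω → Z) :
    Tendsto (fun i ↦ ∫⁻ ω, ‖fderiv ℝ G (w ω, z ω) (e i ω, d i ω) -
      fderiv ℝ G (w ω, z ω) (e₀ ω, d i ω)‖ₑ ^ α ∂P) l (𝓝 0) := by
  have hC : (3 * ENNReal.ofReal C) ^ α ≠ ⊤ := by finiteness
  have hlim := ENNReal.Tendsto.const_mul (tendsto_lintegral_mul_rpow hp hq hr hα hαpq
    (measurable_growth hw hw) (fun i ↦ ((he i).sub he₀).enorm)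
    (lintegral_growth_self_rpow_ne_top hp.le hwp) h) (.inr hC)
  rw [mul_zero] at hlim
  refine tendsto_of_tendsto_of_tendsto_of_le_of_le tendsto_const_nhds hlim
    (fun _ ↦ zero_le) fun i ↦ ?_
  rw [← lintegral_const_mul' _ _ hC]
  simp_rw [← ENNReal.mul_rpow_of_nonneg _ _ hα.le]
  gcongr with ω
  exact hG.enorm_fderiv_sub_fderiv_left_le hr (hGd _) _ _ _

lemma lintegral_rpow_ne_top_of_linearized_recursion [MeasurableSpace W]
    [OpensMeasurableSpace W] [MeasurableSpace Z] [OpensMeasurableSpace Z] (hp : 0 < p) (hq : 0 < q)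
    (hr : 0 ≤ r) (hα : 0 < α) (hαpq : α⁻¹ = r / p + q⁻¹) (hβ : β < 1)
    (hG : GrowthLipschitz C β r G) (hGd : Differentiable ℝ G) (hT : MeasurePreserving T P P)
    {w : Ω → W} {z : Ω → Z} (hw : Measurable w) (hwp : ∫⁻ ω, ‖w ω‖ₑ ^ p ∂P ≠ ⊤)
    {e : Ω → W} (he : ∫⁻ ω, ‖e ω‖ₑ ^ q ∂P ≠ ⊤) {d : Ω → Z}
    (hd : Measurable d) (hrec : ∀ᵐ ω ∂P, d (T ω) = fderiv ℝ G (w ω, z ω) (e ω, d ω)) :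
    ∫⁻ ω, ‖d ω‖ₑ ^ α ∂P ≠ ⊤ := by
  obtain ⟨b, hb, K, hK, hpow⟩ := exists_rpow_le_mul_rpow_add hα (ENNReal.ofReal_lt_one.2 hβ)
  have hforce : ∫⁻ ω, (growth (w ω) (w ω) ^ r * ‖e ω‖ₑ) ^ α ∂P ≠ ⊤ := by
    refine ne_top_of_le_ne_top ?_
      (lintegral_mono fun ω ↦ mul_rpow_le_rpow_add_rpow hp hq hr hα hαpq _ _)
    rw [lintegral_add_left ((measurable_growth hw hw).pow_const p)]
    exact ENNReal.add_ne_top.2 ⟨lintegral_growth_self_rpow_ne_top hp.le hwp, he⟩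
  have hstep : ∀ᵐ ω ∂P, ‖d (T ω)‖ₑ ^ α ≤ b * ‖d ω‖ₑ ^ α +
      K * (3 * ENNReal.ofReal C) ^ α * (growth (w ω) (w ω) ^ r * ‖e ω‖ₑ) ^ α := by
    filter_upwards [hrec] with ω hω
    rw [hω, mul_assoc, ← ENNReal.mul_rpow_of_nonneg _ _ hα.le]
    exact hpow _ _ _ ((hG.enorm_fderiv_apply_le hr (hGd _) _ _).trans_eq (add_comm _ _))
  refine ne_top_of_le_ne_top ?_ (lintegral_le_of_contraction hT (hd.enorm.pow_const α)
    (fun ω ↦ by finiteness) hb hstep)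
  rw [lintegral_const_mul' _ _ (by finiteness)]
  have := (tsub_pos_of_lt hb).ne'
  finiteness

variable [MeasurableSpace W] [BorelSpace W] [SecondCountableTopology W] [MeasurableSpace Z]
  [BorelSpace Z] [SecondCountableTopology Z] [CompleteSpace Z]

lemma tendsto_lintegral_linearization_error (hα : 0 < α) (hr : 0 ≤ r)
    (hG : GrowthLipschitz C β r G) (hGd : Differentiable ℝ G)
    (hgW : ∀ v, Measurable (gW v)) (hgZ : ∀ v, Measurable (gZ v))
    (hrec : ∀ᶠ v in 𝓝 u, ∀ᵐ ω ∂P, gZ v (T ω) = G (gW v ω, gZ v ω))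
    (hW : TendstoInMeasure P (fun Δ ↦ gW (u + Δ)) (𝓝[≠] 0) (gW u))
    (hZ : TendstoInMeasure P (fun Δ ↦ gZ (u + Δ)) (𝓝[≠] 0) (gZ u))
    (hforce : EventuallyUI P (𝓝[≠] 0) fun Δ ω ↦
      (growth (gW u ω) (gW (u + Δ) ω) ^ r * ‖diffQuot gW u Δ ω‖ₑ) ^ α)
    (hquot : EventuallyUI P (𝓝[≠] 0) fun Δ ω ↦ ‖diffQuot gZ u Δ ω‖ₑ ^ α) :
    Tendsto (fun Δ ↦ ∫⁻ ω, ‖diffQuot gZ u Δ (T ω) -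
      fderiv ℝ G (gW u ω, gZ u ω) (diffQuot gW u Δ ω, diffQuot gZ u Δ ω)‖ₑ ^ α ∂P)
      (𝓝[≠] 0) (𝓝 0) := by
  set K : ℝ≥0∞ := 6 * ENNReal.ofReal C + 2 * ENNReal.ofReal β + 1
  have hUI := (hforce.add_rpow hα.le hquot fun Δ ↦
    ((measurable_growth (hgW u) (hgW (u + Δ))).pow_const r).mul
      (measurable_diffQuot hgW u Δ).enorm).const_mul (K := K ^ α) (by finiteness)
  have hx : ∀ v, Measurable fun ω ↦ (gW v ω, gZ v ω) := fun v ↦ (hgW v).prodMk (hgZ v)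
  have hrem := tendsto_lintegral_min_one_relRem_rpow hGd hα (fun Δ ↦ hx (u + Δ)) (hx u)
    (tendstoInMeasure_prodMk hW hZ)
  refine tendsto_of_tendsto_of_tendsto_of_le_of_le' tendsto_const_nhds
    (hUI.tendsto_lintegral_mul (fun Δ ↦ measurable_const.min
      ((measurable_relRem hGd (hx u) (hx (u + Δ))).pow_const α))
      (fun _ _ ↦ min_le_left _ _) hrem) (.of_forall fun _ ↦ zero_le) ?_
  filter_upwards [eventually_ae_diffQuot_comp_eq hrec] with Δ hΔ
  refine lintegral_mono_ae (hΔ.mono fun ω hω ↦ ?_)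
  have hle := ENNReal.rpow_le_rpow
    (hG.enorm_smul_sub_fderiv_le hr (hGd (gW u ω, gZ u ω)) Δ⁻¹ (gW (u + Δ) ω) (gZ (u + Δ) ω)) hα.le
  rw [ENNReal.mul_rpow_of_nonneg _ _ hα.le, ENNReal.mul_rpow_of_nonneg _ _ hα.le,
    (ENNReal.monotone_rpow_of_nonneg hα.le).map_min, ENNReal.one_rpow] at hle
  rw [hω]
  exact hle

lemma tendsto_lintegral_diffQuot_defect (hp : 0 < p) (hq : 0 < q) (hr : 0 ≤ r) (hα : 0 < α)
    (hαpq : α⁻¹ = r / p + q⁻¹) (hβ : β < 1) (hG : GrowthLipschitz C β r G)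
    (hGd : Differentiable ℝ G) (hT : MeasurePreserving T P P)
    (hgW : ∀ v, Measurable (gW v)) (hgZ : ∀ v, Measurable (gZ v))
    (hrec : ∀ᶠ v in 𝓝 u, ∀ᵐ ω ∂P, gZ v (T ω) = G (gW v ω, gZ v ω))
    (hWp : ∫⁻ ω, ‖gW u ω‖ₑ ^ p ∂P ≠ ⊤)
    (hW : Tendsto (fun Δ ↦ ∫⁻ ω, ‖gW (u + Δ) ω - gW u ω‖ₑ ^ p ∂P) (𝓝[≠] 0) (𝓝 0))
    (hZ : TendstoInMeasure P (fun Δ ↦ gZ (u + Δ)) (𝓝[≠] 0) (gZ u))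
    (hgdW : Measurable gdW) (hdWq : ∫⁻ ω, ‖gdW ω‖ₑ ^ q ∂P ≠ ⊤)
    (hdW : IsTimeDeriv P q gW gdW u) :
    Tendsto (fun Δ ↦ ∫⁻ ω, ‖diffQuot gZ u Δ (T ω) -
      fderiv ℝ G (gW u ω, gZ u ω) (gdW ω, diffQuot gZ u Δ ω)‖ₑ ^ α ∂P) (𝓝[≠] 0) (𝓝 0) := by
  have hforce : EventuallyUI P (𝓝[≠] 0) fun Δ ω ↦
      (growth (gW u ω) (gW (u + Δ) ω) ^ r * ‖diffQuot gW u Δ ω‖ₑ) ^ α :=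
    eventuallyUI_mul_rpow hp hq hr hα hαpq (fun Δ ↦ measurable_growth (hgW u) (hgW (u + Δ)))
      (eventuallyUI_growth_rpow hp.le (hgW u) hWp hW)
      (.enorm_rpow_of_tendsto hq.le hgdW hdWq ((isTimeDeriv_iff hq).1 hdW))
  have hlin := tendsto_lintegral_linearization_error hα hr hG hGd hgW hgZ hrec
    (tendstoInMeasure_of_tendsto_lintegral_rpow hp (fun Δ ↦ hgW (u + Δ)) (hgW u) hW) hZ hforce
    (eventuallyUI_diffQuot_of_recursion hα hr hβ hG hT hgZ hrec hforce)
  have hdir := tendsto_lintegral_fderiv_sub_left hp hq hr hα hαpq hG hGd (hgW u) hWp (gZ u)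
    (measurable_diffQuot hgW u) hgdW ((isTimeDeriv_iff hq).1 hdW) (diffQuot gZ u)
  refine tendsto_lintegral_rpow_of_le_add hα.le (fun Δ ↦ ?_)
    (.of_forall fun Δ ↦ ae_of_all _ fun ω ↦ ?_) hlin hdir
  · exact (((measurable_diffQuot hgZ u Δ).comp hT.measurable).sub
      ((measurable_fderiv_uncurry hGd).comp (((hgW u).prodMk (hgZ u)).prodMk
        ((measurable_diffQuot hgW u Δ).prodMk (measurable_diffQuot hgZ u Δ))))).enorm
  · rw [← sub_add_sub_cancel]
    exact enorm_add_le _ _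

theorem gar_time_differentiability_general (hp : 0 < p) (hq : 0 < q) (hr : 0 ≤ r)
    (hαpq : α⁻¹ = r / p + q⁻¹) (hβ : β < 1) (hG : GrowthLipschitz C β r G)
    (hGd : Differentiable ℝ G) (hT : MeasurePreserving T P P)
    (hgW : ∀ v, Measurable (gW v)) (hgZ : ∀ v, Measurable (gZ v))
    (hrec : ∀ᶠ v in 𝓝 u, ∀ᵐ ω ∂P, gZ v (T ω) = G (gW v ω, gZ v ω))
    (hWp : ∫⁻ ω, ‖gW u ω‖ₑ ^ p ∂P ≠ ⊤)
    (hW : Tendsto (fun Δ ↦ ∫⁻ ω, ‖gW (u + Δ) ω - gW u ω‖ₑ ^ p ∂P) (𝓝[≠] 0) (𝓝 0))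
    (hZ : TendstoInMeasure P (fun Δ ↦ gZ (u + Δ)) (𝓝[≠] 0) (gZ u))
    (hgdW : Measurable gdW) (hdWq : ∫⁻ ω, ‖gdW ω‖ₑ ^ q ∂P ≠ ⊤)
    (hdW : IsTimeDeriv P q gW gdW u) :
    ∃ gdZ : Ω → Z, Measurable gdZ ∧
      (∀ t : ℕ, ∀ᵐ ω ∂P, gdZ (T^[t + 1] ω) =
        fderiv ℝ G (gW u (T^[t] ω), gZ u (T^[t] ω)) (gdW (T^[t] ω), gdZ (T^[t] ω))) ∧
      ∫⁻ ω, ‖gdZ ω‖ₑ ^ α ∂P ≠ ⊤ ∧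
      ∀ t : ℕ, IsTimeDeriv P α (fun v ↦ gZ v ∘ T^[t]) (gdZ ∘ T^[t]) u := by
  have hα : 0 < α := inv_pos.1 (hαpq ▸ by positivity)
  have hΛ : Measurable fun y : Ω × Z ↦ ((gW u y.1, gZ u y.1), (gdW y.1, y.2)) := by
    have := hgW u
    have := hgZ u
    fun_prop
  obtain ⟨gdZ, hgdZ, hfix, hlim⟩ := exists_fixed_process_of_contraction_defect
    (Λ := fun ω d ↦ fderiv ℝ G (gW u ω, gZ u ω) (gdW ω, d)) hT hα (ENNReal.ofReal_lt_one.2 hβ)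
    ((measurable_fderiv_uncurry hGd).comp hΛ)
    (fun ω d d' ↦ hG.enorm_fderiv_sub_fderiv_right_le hr (hGd _) _ _ _)
    (fun Δ ↦ measurable_diffQuot hgZ u Δ)
    (tendsto_lintegral_diffQuot_defect hp hq hr hα hαpq hβ hG hGd hT hgW hgZ hrec hWp hW hZ
      hgdW hdWq hdW)
  refine ⟨gdZ, hgdZ, fun t ↦ ?_, lintegral_rpow_ne_top_of_linearized_recursion hp hq hr hα hαpq hβ
    hG hGd hT (hgW u) hWp hdWq hgdZ hfix, fun t ↦ IsTimeDeriv.comp hα (hT.iterate t) hgZ hgdZ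
      ((isTimeDeriv_iff hα).2 hlim)⟩
  simpa only [Function.iterate_succ_apply'] using
    (hT.iterate t).quasiMeasurePreserving.ae hfix

end Recursion

lemma partialZ_apply_add_partialW_apply {dW dZ : ℕ}
    (G : (Fin dW → ℝ) × (Fin dZ → ℝ) → (Fin dZ → ℝ)) (w e : Fin dW → ℝ) (z d : Fin dZ → ℝ) :
    partialZ G w z d + partialW G w z e = fderiv ℝ G (w, z) (e, d) := by
  simp [partialZ, partialW, ← map_add]

/-- Theorem 6(iv) of the paper: time differentiability of the stationary
solution of the recursive system, with the derivative process solving the linearized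
recursion. -/
theorem gar_time_differentiability
    {Ω : Type*} [MeasurableSpace Ω] (P : Measure Ω) [IsProbabilityMeasure P]
    {dW dZ : ℕ}
    (pW αW : ℝ) (hpW : 1 ≤ pW) (hαW : 1 ≤ αW)
    (β C : ℝ) (hβ : β ∈ Set.Ioo (0:ℝ) 1) (rW : ℝ) (hrW : 0 ≤ rW)
    (u : ℝ) (hu : u ∈ Set.Ioo (0:ℝ) 1) (δ₀ : ℝ) (hδ₀ : 0 < δ₀)
    -- the recursion map (parameter θ fixed and suppressed)
    (G : (Fin dW → ℝ) × (Fin dZ → ℝ) → (Fin dZ → ℝ))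
    (hGlip : ∀ (w w' : Fin dW → ℝ) (z z' : Fin dZ → ℝ),
      ‖G (w, z) - G (w', z')‖ ≤
        C * (1 + ‖w‖ ^ rW + ‖w'‖ ^ rW) * ‖w - w'‖ + β * ‖z - z'‖)
    -- (c) continuous differentiability of G with bounded partial derivatives
    (hGdiff : ContDiff ℝ 1 G)
    (hGz : ∀ w z, ‖partialZ G w z‖ ≤ β)
    (hGw : ∀ w z, ‖partialW G w z‖ ≤ C * (1 + ‖w‖ ^ rW))
    -- (a) stationary families, represented through a measure-preserving map T
    (T : Ω → Ω) (hT : MeasurePreserving T P P)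
    (gW : ℝ → Ω → (Fin dW → ℝ)) (gZ : ℝ → Ω → (Fin dZ → ℝ))
    (hgWmeas : ∀ v, Measurable (gW v)) (hgZmeas : ∀ v, Measurable (gZ v))
    (hrec : ∀ (t : ℕ), ∀ v ∈ Metric.ball u δ₀,
      ∀ᵐ ω ∂P, gZ v (T^[t + 1] ω) = G (gW v (T^[t] ω), gZ v (T^[t] ω)))
    (MW : ℝ) (hWmom : ∀ v ∈ Metric.ball u δ₀,
      (∫⁻ ω, ENNReal.ofReal ‖gW v ω‖ ^ pW ∂P) ≤ ENNReal.ofReal MW)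
    (MZ : ℝ) (hZmom : ∀ v ∈ Metric.ball u δ₀,
      (∫⁻ ω, ENNReal.ofReal ‖gZ v ω‖ ^ (pW / (rW + 1)) ∂P) ≤ ENNReal.ofReal MZ)
    (hWlipu : ∀ v ∈ Metric.ball u δ₀, ∀ v' ∈ Metric.ball u δ₀,
      pMoment P pW (fun ω => ‖gW v ω - gW v' ω‖) ≤ ENNReal.ofReal (C * |v - v'|))
    (hZlipu : ∀ v ∈ Metric.ball u δ₀, ∀ v' ∈ Metric.ball u δ₀,
      pMoment P (pW / (rW + 1)) (fun ω => ‖gZ v ω - gZ v' ω‖)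
        ≤ ENNReal.ofReal (C * |v - v'|))
    -- (b) time differentiability of W* at u in the L^{α_W} sense
    (gdW : Ω → (Fin dW → ℝ)) (hgdWmeas : Measurable gdW)
    (hdWmom : (∫⁻ ω, ENNReal.ofReal ‖gdW ω‖ ^ αW ∂P) < ⊤)
    (hdW : ∀ t : ℕ, Tendsto (fun Δ : ℝ =>
        pMoment P αW (fun ω =>
          ‖gW (u + Δ) (T^[t] ω) - gW u (T^[t] ω) - Δ • gdW (T^[t] ω)‖) /
          ENNReal.ofReal |Δ|) (𝓝[≠] (0:ℝ)) (𝓝 0)) :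
    -- conclusion: the linearized recursion defines the L^{α_Z} time derivative of Z*
    ∃ gdZ : Ω → (Fin dZ → ℝ),
      Measurable gdZ ∧
      (∀ t : ℕ, ∀ᵐ ω ∂P, gdZ (T^[t + 1] ω) =
        partialZ G (gW u (T^[t] ω)) (gZ u (T^[t] ω)) (gdZ (T^[t] ω)) +
          partialW G (gW u (T^[t] ω)) (gZ u (T^[t] ω)) (gdW (T^[t] ω))) ∧
      (∫⁻ ω, ENNReal.ofReal ‖gdZ ω‖ ^ (pW * αW / (pW + rW * αW)) ∂P) < ⊤ ∧
      (∀ t : ℕ, Tendsto (fun Δ : ℝ =>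
        pMoment P (pW * αW / (pW + rW * αW)) (fun ω =>
          ‖gZ (u + Δ) (T^[t] ω) - gZ u (T^[t] ω) - Δ • gdZ (T^[t] ω)‖) /
          ENNReal.ofReal |Δ|) (𝓝[≠] (0:ℝ)) (𝓝 0)) := by
  have hpW₀ : 0 < pW := by linarith
  have hαW₀ : 0 < αW := by linarith
  have hu₀ : u ∈ Metric.ball u δ₀ := Metric.mem_ball_self hδ₀
  have hα : (pW * αW / (pW + rW * αW))⁻¹ = rW / pW + αW⁻¹ := by
    field_simp
    ring
  have hrec₀ : ∀ᶠ v in 𝓝 u, ∀ᵐ ω ∂P, gZ v (T ω) = G (gW v ω, gZ v ω) :=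
    eventually_of_mem (Metric.ball_mem_nhds u hδ₀) (hrec 0)
  have hWp : ∫⁻ ω, ‖gW u ω‖ₑ ^ pW ∂P ≠ ⊤ :=
    ne_top_of_le_ne_top ENNReal.ofReal_ne_top (by simpa only [ofReal_norm] using hWmom u hu₀)
  have hW := tendsto_lintegral_rpow_of_pMoment_le hpW₀ hδ₀ fun v hv ↦ hWlipu v hv u hu₀
  have hZ := tendstoInMeasure_of_tendsto_lintegral_rpow (by positivity)
    (fun Δ ↦ hgZmeas (u + Δ)) (hgZmeas u)
    (tendsto_lintegral_rpow_of_pMoment_le (by positivity) hδ₀ fun v hv ↦ hZlipu v hv u hu₀)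
  simp only [ofReal_norm, partialZ_apply_add_partialW_apply, lt_top_iff_ne_top] at hdWmom ⊢
  exact gar_time_differentiability_general hpW₀ hαW₀ hrW hα hβ.2 hGlip
    (hGdiff.differentiable one_ne_zero) hT hgWmeas hgZmeas hrec₀ hWp hW hZ hgdWmeas hdWmom (hdW 0)
end
end

section
/- Let (Ω, 𝒜, μ) be a probability space, T:Ω→Ω an ergodic measure-preserving transformation, and f ∈ L¹(μ) with ∫f dμ = 0. Set W_t := f∘T^t. Let L:ℝ→ℝ be Lipschitz with compact support and fix u ∈ (0,1). Then for any bandwidth sequence b_n → 0 with n·b_n → ∞, (1/n)Σ_{t=1}^n L_{b_n}(t/n − u) W_t → 0 in probability as n → ∞. -/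
open MeasureTheory ProbabilityTheory Filter
open scoped ENNReal NNReal Topology

noncomputable section

/-!
With `s = n * b n` and `U g = g ∘ T` the Koopman operator on `L¹`, the kernel average of `f` is
`∑ t, w t • U ^ t f` for the weights `w t = L ((t - n * u) / s) / s`. Their `ℓ¹` norm stays bounded,
so these operators are uniformly bounded on `L¹` and it is enough to treat a dense set of centered
functions. On a coboundary `g - U g`, summation by parts moves the difference from `g` to the
weights, whose total variation is `O(1 / s)`. Coboundaries are dense among the centered functions
of `L²`, because a vector orthogonal to all of them is fixed by `U`, hence constant by ergodicity;
density in `L¹` follows.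
-/

section Variation

lemma boundedVariationOn_univ_of_hasCompactSupport {E : Type*} [NormedAddCommGroup E] {L : ℝ → E}
    (hL : LocallyBoundedVariationOn L Set.univ) (hsupp : HasCompactSupport L) :
    BoundedVariationOn L Set.univ := by
  obtain ⟨R, hR, hzero⟩ := hsupp.exists_pos_le_norm
  have hclamp : L = L ∘ fun v => max (-R) (min v R) := by
    ext v
    rcases le_or_gt R |v| with hv | hv
    · have hv' : R ≤ |max (-R) (min v R)| := by grind
      rw [Function.comp_apply, hzero v hv, hzero _ hv']
    · rw [Function.comp_apply, min_eq_left (abs_lt.1 hv).2.le, max_eq_right (abs_lt.1 hv).1.le]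
  have hmono : Monotone fun v : ℝ => max (-R) (min v R) := fun v w hvw => by
    dsimp only
    gcongr
  rw [hclamp]
  refine ne_top_of_le_ne_top (hL (-R) R (Set.mem_univ _) (Set.mem_univ _))
    (eVariationOn.comp_le_of_monotoneOn L _ (hmono.monotoneOn _) fun v _ => ?_)
  exact ⟨Set.mem_univ _, le_max_left _ _, max_le (by linarith) (min_le_right _ _)⟩

lemma norm_le_toReal_eVariationOn_of_hasCompactSupport {E : Type*} [NormedAddCommGroup E]
    {L : ℝ → E} (hL : BoundedVariationOn L Set.univ) (hsupp : HasCompactSupport L) (v : ℝ) :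
    ‖L v‖ ≤ (eVariationOn L Set.univ).toReal := by
  obtain ⟨R, -, hzero⟩ := hsupp.exists_pos_le_norm
  simpa [hzero R (le_abs_self R)] using hL.dist_le (Set.mem_univ v) (Set.mem_univ R)

lemma sum_norm_sub_le_toReal_eVariationOn {α E : Type*} [LinearOrder α] [NormedAddCommGroup E]
    {f : α → E} {s : Set α} (hf : BoundedVariationOn f s) {u : ℕ → α} {m n : ℕ}
    (hu : MonotoneOn u (Set.Icc m n)) (hus : ∀ i ∈ Set.Icc m n, u i ∈ s) :
    ∑ i ∈ Finset.Ico m n, ‖f (u (i + 1)) - f (u i)‖ ≤ (eVariationOn f s).toReal := by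
  refine (ENNReal.ofReal_le_iff_le_toReal hf).1 ?_
  rw [ENNReal.ofReal_sum_of_nonneg fun _ _ => norm_nonneg _]
  simpa only [← dist_eq_norm, ← edist_dist] using eVariationOn.sum_le_of_monotoneOn_Icc hu hus

/-- The total variation on `ℕ` of the sequence equal to `w t` for `1 ≤ t ≤ n + 1` and to zero
elsewhere. It bounds the sums of a coboundary with weights `w`. -/
def truncatedVariation (w : ℕ → ℝ) (n : ℕ) : ℝ :=
  |w 1| + |w (n + 1)| + ∑ t ∈ Finset.Icc 1 n, |w (t + 1) - w t|

lemma truncatedVariation_nonneg (w : ℕ → ℝ) (n : ℕ) : 0 ≤ truncatedVariation w n := by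
  unfold truncatedVariation
  positivity

end Variation

section RescaledKernel

/-- The kernel `L_b` obtained from `L` at bandwidth `b`. -/
def rescaledKernel (L : ℝ → ℝ) (b v : ℝ) : ℝ := L (v / b) / b

lemma rescaledKernel_mul_mul (L : ℝ → ℝ) {c : ℝ} (hc : c ≠ 0) (b v : ℝ) :
    rescaledKernel L (c * b) (c * v) = c⁻¹ * rescaledKernel L b v := by
  rw [rescaledKernel, rescaledKernel, mul_div_mul_left _ _ hc]
  ring

lemma card_le_of_abs_sub_le {s : Finset ℕ} {x r : ℝ} (hr : 0 ≤ r)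
    (hs : ∀ t ∈ s, |(t : ℝ) - x| ≤ r) : (s.card : ℝ) ≤ 2 * r + 1 := by
  rcases s.eq_empty_or_nonempty with rfl | hne
  · rw [Finset.card_empty, Nat.cast_zero]
    positivity
  have hcard : s.card ≤ s.max' hne + 1 - s.min' hne := by
    rw [← Nat.card_Icc]
    exact Finset.card_le_card fun t ht =>
      Finset.mem_Icc.2 ⟨s.min'_le t ht, s.le_max' t ht⟩
  have hmin := abs_le.1 (hs _ (s.min'_mem hne))
  have hmax := abs_le.1 (hs _ (s.max'_mem hne))
  have hle : s.min' hne ≤ s.max' hne := s.min'_le_max' hne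
  have hcard' : (s.card : ℝ) + s.min' hne ≤ s.max' hne + 1 := by
    exact_mod_cast (by lia : s.card + s.min' hne ≤ s.max' hne + 1)
  linarith

lemma sum_abs_rescaledKernel_le {L : ℝ → ℝ} {V R b : ℝ} (hV : ∀ v, |L v| ≤ V) (hR : 0 ≤ R)
    (hsupp : ∀ v, R ≤ |v| → L v = 0) (hb : 1 ≤ b) (x : ℝ) (s : Finset ℕ) :
    ∑ t ∈ s, |rescaledKernel L b (t - x)| ≤ (2 * R + 1) * V := by
  have hb0 : 0 < b := one_pos.trans_le hb
  have hV0 : 0 ≤ V := (abs_nonneg _).trans (hV 0)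
  set near : Finset ℕ := {t ∈ s | |(t : ℝ) - x| ≤ R * b}
  have hcard : (near.card : ℝ) ≤ 2 * (R * b) + 1 :=
    card_le_of_abs_sub_le (by positivity) fun t ht => (Finset.mem_filter.1 ht).2
  have hfar (t : ℕ) (_ : t ∈ s) (hne : |rescaledKernel L b (t - x)| ≠ 0) :
      |(t : ℝ) - x| ≤ R * b := by
    contrapose! hne
    rw [rescaledKernel, hsupp, zero_div, abs_zero]
    rw [abs_div, abs_of_pos hb0, le_div_iff₀ hb0]
    exact hne.le
  calc ∑ t ∈ s, |rescaledKernel L b (t - x)|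
      = ∑ t ∈ near, |rescaledKernel L b (t - x)| := (Finset.sum_filter_of_ne hfar).symm
    _ ≤ near.card • (V / b) := by
        refine Finset.sum_le_card_nsmul _ _ _ fun t _ => ?_
        rw [rescaledKernel, abs_div, abs_of_pos hb0]
        gcongr
        exact hV _
    _ ≤ (2 * (R * b) + 1) * (V / b) := by
        rw [nsmul_eq_mul]
        gcongr
    _ = (2 * R + 1 / b) * V := by field_simp
    _ ≤ (2 * R + 1) * V := by
        gcongr
        exact (div_le_one hb0).2 hb

lemma truncatedVariation_rescaledKernel_le {L : ℝ → ℝ} (hL : BoundedVariationOn L Set.univ)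
    (hsupp : HasCompactSupport L) {b : ℝ} (hb : 0 < b) (x : ℝ) (n : ℕ) :
    truncatedVariation (fun t => rescaledKernel L b (t - x)) n ≤
      3 * (eVariationOn L Set.univ).toReal / b := by
  have hbound (v : ℝ) : |rescaledKernel L b v| ≤ (eVariationOn L Set.univ).toReal / b := by
    rw [rescaledKernel, abs_div, abs_of_pos hb]
    gcongr
    exact norm_le_toReal_eVariationOn_of_hasCompactSupport hL hsupp _
  have hmono : Monotone fun t : ℕ => ((t : ℝ) - x) / b := fun t t' h => by
    dsimp only
    gcongr
  have hsum : ∑ t ∈ Finset.Icc 1 n,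
      |rescaledKernel L b ((t + 1 : ℕ) - x) - rescaledKernel L b (t - x)| ≤
        (eVariationOn L Set.univ).toReal / b := by
    simp only [rescaledKernel, ← sub_div, abs_div _ b, abs_of_pos hb, ← Finset.sum_div]
    gcongr
    rw [← Finset.Ico_add_one_right_eq_Icc]
    exact sum_norm_sub_le_toReal_eVariationOn hL (hmono.monotoneOn _) fun _ _ => Set.mem_univ _
  calc truncatedVariation (fun t => rescaledKernel L b (t - x)) n
      ≤ (eVariationOn L Set.univ).toReal / b + (eVariationOn L Set.univ).toReal / b +
          (eVariationOn L Set.univ).toReal / b :=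
        add_le_add_three (hbound _) (hbound _) hsum
    _ = 3 * (eVariationOn L Set.univ).toReal / b := by ring

end RescaledKernel

section SummationByParts

variable {R M : Type*} [Ring R] [AddCommGroup M] [Module R M]

lemma sum_Icc_smul_sub_succ (w : ℕ → R) (x : ℕ → M) (n : ℕ) :
    ∑ t ∈ Finset.Icc 1 n, w t • (x t - x (t + 1)) =
      w 1 • x 1 - w (n + 1) • x (n + 1) +
        ∑ t ∈ Finset.Icc 1 n, (w (t + 1) - w t) • x (t + 1) := by
  induction n with
  | zero => simp
  | succ n ih =>
    rw [Finset.sum_Icc_succ_top (by lia), Finset.sum_Icc_succ_top (by lia), ih]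
    simp only [smul_sub, sub_smul]
    abel

end SummationByParts

section CoboundaryClosure

variable {E F J : Type*} [NormedAddCommGroup E] [NormedSpace ℝ E] [NormedAddCommGroup F]
  [NormedSpace ℝ F] {U : E →L[ℝ] E}

lemma map_mem_closure_range_one_sub [FunLike J E F] [AddMonoidHomClass J E F] {V : F →L[ℝ] F}
    {j : J} (hj : Continuous j) (hUV : Function.Semiconj j U V) {x : E}
    (hx : x ∈ (1 - U).range.topologicalClosure) : j x ∈ (1 - V).range.topologicalClosure := by
  refine map_mem_closure hj hx ?_
  rintro _ ⟨y, rfl⟩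
  refine ⟨j y, ?_⟩
  simp [hUV.eq]

lemma norm_iterate_le (hU : ‖U‖ ≤ 1) (t : ℕ) (x : E) : ‖U^[t] x‖ ≤ ‖x‖ := by
  have hlip : LipschitzWith 1 U := U.lipschitz.weaken hU
  simpa [iterate_map_zero] using (hlip.iterate t).dist_le_mul x 0

lemma norm_smul_iterate_le (hU : ‖U‖ ≤ 1) (c : ℝ) (t : ℕ) (x : E) :
    ‖c • U^[t] x‖ ≤ |c| * ‖x‖ := by
  rw [norm_smul, Real.norm_eq_abs]
  gcongr
  exact norm_iterate_le hU t x

lemma norm_sum_smul_iterate_le (hU : ‖U‖ ≤ 1) (s : Finset ℕ) (w : ℕ → ℝ) (x : E) :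
    ‖∑ t ∈ s, w t • U^[t] x‖ ≤ (∑ t ∈ s, |w t|) * ‖x‖ := by
  rw [Finset.sum_mul]
  exact norm_sum_le_of_le s fun t _ => norm_smul_iterate_le hU (w t) t x

lemma norm_sum_smul_iterate_sub_map_le (hU : ‖U‖ ≤ 1) (w : ℕ → ℝ) (n : ℕ) (x : E) :
    ‖∑ t ∈ Finset.Icc 1 n, w t • U^[t] (x - U x)‖ ≤ truncatedVariation w n * ‖x‖ := by
  simp only [iterate_map_sub, ← Function.iterate_succ_apply]
  rw [sum_Icc_smul_sub_succ w (fun t => U^[t] x), truncatedVariation, add_mul, add_mul,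
    Finset.sum_mul]
  exact norm_add_le_of_le
    (norm_sub_le_of_le (norm_smul_iterate_le hU _ 1 x) (norm_smul_iterate_le hU _ (n + 1) x))
    (norm_sum_le_of_le _ fun t _ => norm_smul_iterate_le hU _ (t + 1) x)

theorem tendsto_sum_smul_iterate_of_mem_closure_range {ι : Type*} {l : Filter ι} (hU : ‖U‖ ≤ 1)
    {w : ι → ℕ → ℝ} {n : ι → ℕ} {C : ℝ}
    (hC : ∀ᶠ i in l, ∑ t ∈ Finset.Icc 1 (n i), |w i t| ≤ C)
    (hvar : Tendsto (fun i => truncatedVariation (w i) (n i)) l (𝓝 0))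
    {x : E} (hx : x ∈ (1 - U).range.topologicalClosure) :
    Tendsto (fun i => ∑ t ∈ Finset.Icc 1 (n i), w i t • U^[t] x) l (𝓝 0) := by
  have hC' : ∀ᶠ i in l, ∑ t ∈ Finset.Icc 1 (n i), |w i t| ≤ max C 1 :=
    hC.mono fun i hi => hi.trans (le_max_left C 1)
  rw [tendsto_zero_iff_norm_tendsto_zero, Metric.tendsto_nhds]
  intro ε hε
  obtain ⟨_, ⟨y, rfl⟩, hxy⟩ := Metric.mem_closure_iff.1 hx (ε / 2 / max C 1) (by positivity)
  have hvar' : Tendsto (fun i => truncatedVariation (w i) (n i) * ‖y‖) l (𝓝 0) := by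
    simpa using hvar.mul_const ‖y‖
  filter_upwards [hC', hvar'.eventually_lt_const (half_pos hε)] with i hCi hvari
  rw [dist_zero_right, norm_norm]
  calc ‖∑ t ∈ Finset.Icc 1 (n i), w i t • U^[t] x‖
      = ‖∑ t ∈ Finset.Icc 1 (n i), w i t • U^[t] (x - (1 - U) y) +
          ∑ t ∈ Finset.Icc 1 (n i), w i t • U^[t] ((1 - U) y)‖ := by
        simp only [iterate_map_sub, smul_sub, Finset.sum_sub_distrib, sub_add_cancel]
    _ ≤ max C 1 * ‖x - (1 - U) y‖ + truncatedVariation (w i) (n i) * ‖y‖ :=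
        norm_add_le_of_le
          ((norm_sum_smul_iterate_le hU _ _ _).trans (by gcongr))
          (norm_sum_smul_iterate_sub_map_le hU _ _ _)
    _ < max C 1 * (ε / 2 / max C 1) + ε / 2 := by
        gcongr
        simpa [dist_eq_norm] using hxy
    _ = ε := by field_simp; norm_num

end CoboundaryClosure

section Hilbert

variable {𝕜 H : Type*} [RCLike 𝕜] [NormedAddCommGroup H] [InnerProductSpace 𝕜 H]

lemma map_eq_self_of_mem_orthogonal_range_one_sub {U : H →L[𝕜] H} (hU : ‖U‖ ≤ 1) {x : H}
    (hx : x ∈ (1 - U).rangeᗮ) : U x = x := by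
  have hinner (y : H) : inner 𝕜 (U y) x = inner 𝕜 y x := by
    have horth := (Submodule.mem_orthogonal _ _).1 hx (y - U y) ⟨y, rfl⟩
    rwa [inner_sub_left, sub_eq_zero, eq_comm] at horth
  -- `⟪U x, x⟫ = ‖x‖ ^ 2` and `‖U x‖ ≤ ‖x‖` force equality in Cauchy–Schwarz.
  refine eq_of_norm_le_re_inner_eq_norm_sq (𝕜 := 𝕜) (by simpa using U.le_of_opNorm_le hU x) ?_
  simp [hinner]

lemma mem_closure_range_one_sub_of_forall_inner_eq_zero [CompleteSpace H] {U : H →L[𝕜] H}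
    (hU : ‖U‖ ≤ 1) {x : H} (hx : ∀ y, U y = y → inner 𝕜 y x = 0) :
    x ∈ (1 - U).range.topologicalClosure := by
  rw [← Submodule.orthogonal_orthogonal_eq_closure, Submodule.mem_orthogonal]
  exact fun y hy => hx y (map_eq_self_of_mem_orthogonal_range_one_sub hU hy)

end Hilbert

section Lp

variable {Ω E F : Type*} [MeasurableSpace Ω] {μ : Measure Ω} [NormedAddCommGroup E]
  {p q : ℝ≥0∞} [Fact (1 ≤ p)]

lemma continuous_Lp_inclusion [IsFiniteMeasure μ] [Fact (1 ≤ q)] (hpq : p ≤ q) :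
    Continuous (AddSubgroup.inclusion (Lp.antitone (E := E) (μ := μ) hpq)) := by
  refine AddMonoidHomClass.continuous_of_bound _
    ((μ Set.univ ^ (1 / p.toReal - 1 / q.toReal)).toReal) fun f => ?_
  rw [Lp.norm_def, Lp.norm_def, mul_comm, ← ENNReal.toReal_mul]
  refine ENNReal.toReal_mono ?_
    (eLpNorm_le_eLpNorm_mul_rpow_measure_univ hpq f.1.aestronglyMeasurable)
  have hexp : 0 ≤ 1 / p.toReal - 1 / q.toReal := by
    rw [one_div, one_div, ← ENNReal.toReal_inv, ← ENNReal.toReal_inv, sub_nonneg]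
    exact ENNReal.toReal_mono (ENNReal.inv_ne_top.2 (zero_lt_one.trans_le Fact.out).ne')
      (ENNReal.inv_le_inv.2 hpq)
  exact ENNReal.mul_ne_top (Lp.eLpNorm_ne_top f)
    (ENNReal.rpow_ne_top_of_nonneg hexp (measure_ne_top μ _))

variable [NormedSpace ℝ E] [NormedAddCommGroup F] [NormedSpace ℝ F]

lemma compLpL_const [IsFiniteMeasure μ] (A : E →L[ℝ] F) (c : E) :
    A.compLpL p μ (Lp.const p μ c) = Lp.const p μ (A c) := by
  refine Lp.ext ?_
  filter_upwards [A.coeFn_compLpL (Lp.const p μ c), Lp.coeFn_const (p := p) (μ := μ) c,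
    Lp.coeFn_const (p := p) (μ := μ) (A c)] with ω hcomp hc hAc
  rw [hcomp, hc, hAc, Function.const_apply, Function.const_apply]

lemma indicatorConstLp_eq_compLpL_toSpanSingleton {s : Set Ω} (hs : MeasurableSet s)
    (hμs : μ s ≠ ∞) (c : E) :
    indicatorConstLp p hs hμs c =
      (ContinuousLinearMap.toSpanSingleton ℝ c).compLpL p μ
        (indicatorConstLp p hs hμs (1 : ℝ)) := by
  refine Lp.ext ?_
  filter_upwards [indicatorConstLp_coeFn (p := p) (hs := hs) (hμs := hμs) (c := c),
    indicatorConstLp_coeFn (p := p) (hs := hs) (hμs := hμs) (c := (1 : ℝ)),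
    (ContinuousLinearMap.toSpanSingleton ℝ c).coeFn_compLpL
      (indicatorConstLp p hs hμs (1 : ℝ))] with ω hc hone hcomp
  rw [hc, hcomp, hone]
  by_cases hω : ω ∈ s <;> simp [hω]

variable [CompleteSpace E] [IsFiniteMeasure μ]

variable (E μ) in
/-- The projection `f ↦ f - ⨍ f` of `L¹` onto the centered functions. -/
def centering : Lp E 1 μ →L[ℝ] Lp E 1 μ :=
  1 - Lp.constL 1 μ ℝ ∘L ((μ.real Set.univ)⁻¹ • L1.integralCLM)

lemma centering_apply (f : Lp E 1 μ) :
    centering E μ f = f - Lp.const 1 μ (⨍ ω, f ω ∂μ) := by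
  rw [average_eq, ← L1.integral_eq_integral, L1.integral_eq]
  rfl

lemma centering_compLpL [CompleteSpace F] (A : E →L[ℝ] F) (f : Lp E 1 μ) :
    centering F μ (A.compLpL 1 μ f) = A.compLpL 1 μ (centering E μ f) := by
  have haverage : ⨍ ω, A.compLpL 1 μ f ω ∂μ = A (⨍ ω, f ω ∂μ) := by
    rw [average_eq, average_eq, A.map_smul, ← A.integral_comp_L1_comm]
    exact congrArg _ (A.integral_compLp f)
  rw [centering_apply, centering_apply, map_sub, compLpL_const, haverage]

end Lp

section Koopman

variable {Ω E F H : Type*} [MeasurableSpace Ω] {μ : Measure Ω} {T : Ω → Ω} {p : ℝ≥0∞}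
  [NormedAddCommGroup E] [NormedSpace ℝ E] [NormedAddCommGroup F] [NormedSpace ℝ F]
  [NormedAddCommGroup H] [InnerProductSpace ℝ H]

variable (E) in
/-- The Koopman operator `f ↦ f ∘ T` of a measure-preserving map on `Lᵖ`. -/
def koopman (p : ℝ≥0∞) [Fact (1 ≤ p)] (hT : MeasurePreserving T μ μ) : Lp E p μ →L[ℝ] Lp E p μ :=
  (Lp.compMeasurePreservingₗᵢ ℝ T hT).toContinuousLinearMap

lemma norm_koopman_le_one (p : ℝ≥0∞) [Fact (1 ≤ p)] (hT : MeasurePreserving T μ μ) :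
    ‖koopman E p hT‖ ≤ 1 :=
  LinearIsometry.norm_toContinuousLinearMap_le _

lemma coeFn_koopman [Fact (1 ≤ p)] (hT : MeasurePreserving T μ μ) (f : Lp E p μ) :
    koopman E p hT f =ᵐ[μ] f ∘ T :=
  Lp.coeFn_compMeasurePreserving f hT

lemma koopman_iterate_toLp [Fact (1 ≤ p)] (hT : MeasurePreserving T μ μ) {f : Ω → E}
    (hf : MemLp f p μ) (t : ℕ) :
    (koopman E p hT)^[t] hf.toLp = (hf.comp_measurePreserving (hT.iterate t)).toLp (f ∘ T^[t]) :=
  congrFun (Lp.compMeasurePreserving_iterate hT t) hf.toLp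

lemma aestronglyMeasurable_sum_smul_comp_iterate (hT : Measure.QuasiMeasurePreserving T μ μ)
    {f : Ω → E} (hf : AEStronglyMeasurable f μ) (s : Finset ℕ) (w : ℕ → ℝ) :
    AEStronglyMeasurable (fun ω => ∑ t ∈ s, w t • f (T^[t] ω)) μ :=
  Finset.aestronglyMeasurable_fun_sum s fun t _ =>
    (hf.comp_quasiMeasurePreserving (hT.iterate t)).const_smul (w t)

lemma enorm_sum_smul_koopman_iterate [Fact (1 ≤ p)] (hT : MeasurePreserving T μ μ)
    {f : Ω → E} (hf : MemLp f p μ) (s : Finset ℕ) (w : ℕ → ℝ) :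
    ‖∑ t ∈ s, w t • (koopman E p hT)^[t] hf.toLp‖ₑ =
      eLpNorm (fun ω => ∑ t ∈ s, w t • f (T^[t] ω)) p μ := by
  rw [Lp.enorm_def]
  refine eLpNorm_congr_ae ?_
  have hterm (t : ℕ) : (w t • (koopman E p hT)^[t] hf.toLp : Lp E p μ) =ᵐ[μ]
      fun ω => w t • f (T^[t] ω) := by
    rw [koopman_iterate_toLp, ← MemLp.toLp_const_smul]
    exact MemLp.coeFn_toLp _
  filter_upwards [Lp.coeFn_finsetSum s fun t => w t • (koopman E p hT)^[t] hf.toLp,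
    ae_all_iff.2 hterm] with ω hsum hω
  rw [hsum, Finset.sum_apply, Finset.sum_congr rfl fun t _ => hω t]

variable (E) in
/-- The coboundaries of `T` in `Lᵖ`, the functions `g - g ∘ T` with `g` in `Lᵖ`. -/
def coboundaries (p : ℝ≥0∞) [Fact (1 ≤ p)] (hT : MeasurePreserving T μ μ) :
    Submodule ℝ (Lp E p μ) :=
  (1 - koopman E p hT).range

lemma mem_closure_coboundaries_of_integral_eq_zero [CompleteSpace H] [IsFiniteMeasure μ]
    (hT : Ergodic T μ) {f : Lp H 2 μ} (hf : ∫ ω, f ω ∂μ = 0) :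
    f ∈ (coboundaries H 2 hT.toMeasurePreserving).topologicalClosure := by
  have hnorm := norm_koopman_le_one (E := H) 2 hT.toMeasurePreserving
  refine mem_closure_range_one_sub_of_forall_inner_eq_zero (𝕜 := ℝ) (H := Lp H 2 μ) hnorm
    fun x hx => ?_
  have hinvariant : x ∘ T =ᵐ[μ] x :=
    (coeFn_koopman hT.toMeasurePreserving x).symm.trans (by rw [hx])
  obtain ⟨c, hc⟩ := hT.ae_eq_const_of_ae_eq_comp_ae (Lp.aestronglyMeasurable x) hinvariant
  have hinner : (fun ω => inner ℝ (x ω) (f ω)) =ᵐ[μ] fun ω => inner ℝ c (f ω) := by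
    filter_upwards [hc] with ω hω
    rw [hω, Function.const_apply]
  rw [L2.inner_def, integral_congr_ae hinner,
    integral_inner ((Lp.memLp f).integrable one_le_two), hf, inner_zero_right]

lemma semiconj_compLpL_koopman [Fact (1 ≤ p)] (hT : MeasurePreserving T μ μ) (A : E →L[ℝ] F) :
    Function.Semiconj (A.compLpL p μ) (koopman E p hT) (koopman F p hT) := by
  refine fun g => Lp.ext ?_
  filter_upwards [coeFn_koopman hT (A.compLpL p μ g),
    hT.quasiMeasurePreserving.ae_eq_comp (A.coeFn_compLpL g),
    A.coeFn_compLpL (koopman E p hT g), coeFn_koopman hT g] with ω hAg hAgT hA hg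
  rw [hAg, hA, hg, hAgT, Function.comp_apply, Function.comp_apply]

lemma compLpL_mem_closure_coboundaries [Fact (1 ≤ p)] (hT : MeasurePreserving T μ μ)
    (A : E →L[ℝ] F) {f : Lp E p μ} (hf : f ∈ (coboundaries E p hT).topologicalClosure) :
    A.compLpL p μ f ∈ (coboundaries F p hT).topologicalClosure :=
  map_mem_closure_range_one_sub (A.compLpL p μ).continuous (semiconj_compLpL_koopman hT A) hf

lemma centering_inclusion_mem_closure_coboundaries [CompleteSpace H] [IsFiniteMeasure μ]
    (hT : Ergodic T μ) (f : Lp H 2 μ) :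
    centering H μ (AddSubgroup.inclusion (Lp.antitone one_le_two) f) ∈
      (coboundaries H 1 hT.toMeasurePreserving).topologicalClosure := by
  have hsemiconj : Function.Semiconj (AddSubgroup.inclusion (Lp.antitone one_le_two))
      (koopman H 2 hT.toMeasurePreserving) (koopman H 1 hT.toMeasurePreserving) := fun _ => rfl
  rw [centering_apply]
  refine map_mem_closure_range_one_sub (continuous_Lp_inclusion one_le_two) hsemiconj
    (x := f - Lp.const 2 μ (⨍ ω, f ω ∂μ)) (mem_closure_coboundaries_of_integral_eq_zero hT ?_)
  rw [← integral_sub_average μ f]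
  refine integral_congr_ae ?_
  filter_upwards [Lp.coeFn_sub f (Lp.const 2 μ (⨍ ω, f ω ∂μ)),
    Lp.coeFn_const (p := 2) (μ := μ) (⨍ ω, f ω ∂μ)] with ω hsub hconst
  rw [hsub, Pi.sub_apply, hconst, Function.const_apply]

variable [CompleteSpace E] [IsFiniteMeasure μ]

theorem centering_mem_closure_coboundaries (hT : Ergodic T μ) (f : Lp E 1 μ) :
    centering E μ f ∈ (coboundaries E 1 hT.toMeasurePreserving).topologicalClosure := by
  induction f using Lp.induction ENNReal.one_ne_top with
  | indicatorConst c hs hμs =>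
    rw [Lp.simpleFunc.coe_indicatorConst, indicatorConstLp_eq_compLpL_toSpanSingleton,
      centering_compLpL]
    exact compLpL_mem_closure_coboundaries hT.toMeasurePreserving _
      (centering_inclusion_mem_closure_coboundaries hT (indicatorConstLp 2 hs hμs.ne (1 : ℝ)))
  | add hf hg _ hf' hg' =>
    rw [map_add]
    exact add_mem hf' hg'
  | isClosed =>
    exact (Submodule.isClosed_topologicalClosure _).preimage (centering E μ).continuous

theorem tendsto_eLpNorm_sum_smul_comp_iterate (hT : Ergodic T μ) {f : Ω → E} (hf : Integrable f μ)
    (hf0 : ∫ ω, f ω ∂μ = 0) {ι : Type*} {l : Filter ι} {w : ι → ℕ → ℝ} {n : ι → ℕ} {C : ℝ}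
    (hC : ∀ᶠ i in l, ∑ t ∈ Finset.Icc 1 (n i), |w i t| ≤ C)
    (hvar : Tendsto (fun i => truncatedVariation (w i) (n i)) l (𝓝 0)) :
    Tendsto (fun i => eLpNorm (fun ω => ∑ t ∈ Finset.Icc 1 (n i), w i t • f (T^[t] ω)) 1 μ)
      l (𝓝 0) := by
  have hf1 : MemLp f 1 μ := memLp_one_iff_integrable.2 hf
  have hcentered : centering E μ hf1.toLp = hf1.toLp := by
    rw [centering_apply, average_eq, integral_congr_ae hf1.coeFn_toLp, hf0, smul_zero, map_zero,
      sub_zero]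
  have hmem := centering_mem_closure_coboundaries hT hf1.toLp
  rw [hcentered] at hmem
  simp only [← enorm_sum_smul_koopman_iterate hT.toMeasurePreserving hf1]
  simpa only [enorm_zero] using
    (tendsto_sum_smul_iterate_of_mem_closure_range (norm_koopman_le_one 1 _) hC hvar hmem).enorm

end Koopman

theorem kernel_ergodic_lln_general
    {Ω E : Type*} [MeasurableSpace Ω] [NormedAddCommGroup E] [NormedSpace ℝ E] [CompleteSpace E]
    (P : Measure Ω) [IsFiniteMeasure P] (T : Ω → Ω) (hT : Ergodic T P)
    (f : Ω → E) (hfint : Integrable f P) (hf0 : ∫ ω, f ω ∂P = 0)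
    (L : ℝ → ℝ) (hL : BoundedVariationOn L Set.univ) (hLsupp : HasCompactSupport L)
    (u : ℝ) (b : ℕ → ℝ) (hnb : Tendsto (fun n : ℕ => (n : ℝ) * b n) atTop atTop) :
    Tendsto (fun n : ℕ => eLpNorm (fun ω => (1 / (n : ℝ)) • ∑ t ∈ Finset.Icc 1 n,
      rescaledKernel L (b n) ((t : ℝ) / n - u) • f (T^[t] ω)) 1 P) atTop (𝓝 0) := by
  obtain ⟨R, hR, hzero⟩ := hLsupp.exists_pos_le_norm
  set w : ℕ → ℕ → ℝ := fun n t => rescaledKernel L (n * b n) (t - n * u)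
  have hweight (n : ℕ) (hn : n ≠ 0) (t : ℕ) :
      1 / (n : ℝ) * rescaledKernel L (b n) (t / n - u) = w n t := by
    have hn' : (n : ℝ) ≠ 0 := Nat.cast_ne_zero.2 hn
    rw [one_div, ← rescaledKernel_mul_mul L hn', mul_sub, mul_div_cancel₀ _ hn']
  have hbound : ∀ᶠ n in atTop,
      ∑ t ∈ Finset.Icc 1 n, |w n t| ≤ (2 * R + 1) * (eVariationOn L Set.univ).toReal :=
    (hnb.eventually_ge_atTop 1).mono fun n hn =>
      sum_abs_rescaledKernel_le (norm_le_toReal_eVariationOn_of_hasCompactSupport hL hLsupp)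
        hR.le hzero hn _ _
  have hvar : Tendsto (fun n => truncatedVariation (w n) n) atTop (𝓝 0) :=
    squeeze_zero' (.of_forall fun n => truncatedVariation_nonneg _ _)
      ((hnb.eventually_gt_atTop 0).mono fun n hn =>
        truncatedVariation_rescaledKernel_le hL hLsupp hn _ _)
      (hnb.const_div_atTop _)
  refine (tendsto_eLpNorm_sum_smul_comp_iterate hT hfint hf0 hbound hvar).congr' ?_
  filter_upwards [eventually_ne_atTop 0] with n hn
  simp only [Finset.smul_sum, smul_smul, hweight n hn]

/-- kernel-weighted ergodic law of large numbers. -/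
theorem kernel_ergodic_lln
    {Ω : Type*} [MeasurableSpace Ω] (P : Measure Ω) [IsProbabilityMeasure P]
    (T : Ω → Ω) (hT : Ergodic T P)
    (f : Ω → ℝ) (hfint : Integrable f P) (hf0 : (∫ ω, f ω ∂P) = 0)
    (L : ℝ → ℝ) (LL : ℝ≥0) (hLlip : LipschitzWith LL L) (hLsupp : HasCompactSupport L)
    (u : ℝ) (hu : u ∈ Set.Ioo (0:ℝ) 1)
    (b : ℕ → ℝ) (hbpos : ∀ n, 0 < b n)
    (hb0 : Tendsto b atTop (𝓝 0))
    (hnb : Tendsto (fun n : ℕ => (n : ℝ) * b n) atTop atTop) :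
    TendstoInMeasure P
      (fun (n : ℕ) (ω : Ω) => (1 / (n : ℝ)) * ∑ t ∈ Finset.Icc 1 n,
        (L (((t : ℝ) / n - u) / b n) / b n) * f (T^[t] ω))
      atTop (fun _ => (0 : ℝ)) := by
  have hL : BoundedVariationOn L Set.univ :=
    boundedVariationOn_univ_of_hasCompactSupport (hLlip.locallyBoundedVariationOn _) hLsupp
  refine tendstoInMeasure_of_tendsto_eLpNorm one_ne_zero (fun n => ?_) aestronglyMeasurable_const ?_
  · exact (aestronglyMeasurable_sum_smul_comp_iterate hT.quasiMeasurePreserving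
      hfint.aestronglyMeasurable _ _).const_mul _
  · simpa only [rescaledKernel, smul_eq_mul, Pi.sub_def, sub_zero] using
      kernel_ergodic_lln_general P T hT f hfint hf0 L hL hLsupp u b hnb
end
end

section
/- Let Θ ⊆ ℝ^{d_θ} and let g:Θ→ℝ be a bounded measurable function with a unique maximum at θ₀ ∈ Θ, i.e. g(θ) < g(θ₀) for every θ ∈ Θ with θ ≠ θ₀. Let K:ℝ→ℝ be nonnegative and Lebesgue-measurable with compact support 𝒦 and ∫K(v)dv = 1. Fix m ≥ 0, let D(v) := (1, v, v²/2!, …, v^m/m!)′ ⊗ I_{d_θ}, and set A := {α ∈ ℝ^{(m+1)d_θ} : D(v)α ∈ Θ for all v ∈ 𝒦} and Q*(α) := ∫ K(v) g(D(v)α) dv. Then α* := (θ₀′, 0, …, 0)′ ∈ A satisfies Q*(α) < Q*(α*) for every α ∈ A with α ≠ α*; that is, α* is the unique maximizer of Q* over A. (Key step: for α ≠ α* the vector polynomial v ↦ D(v)α differs from the constant θ₀ for all but finitely many v, while the set {K > 0} has positive Lebesgue measure, so the integrand is strictly below g(θ₀) on a set of positive K-weighted measure.) -/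
/-!
The curve `v ↦ D(v)α - D(v)α*` is a nonzero polynomial with vector coefficients.  Composing it with
a linear functional that does not kill one of those coefficients gives a nonzero scalar polynomial,
so `D(v)α = D(v)α* = θ₀` for only finitely many `v`.  Hence `g (D(v)α) < g θ₀` at almost every `v`
with `K v ≠ 0`, and as `∫ K > 0`, the kernel is nonzero on a set of positive measure, which makes
the inequality between the integrals strict.
-/

open MeasureTheory Filter
open scoped Topology

noncomputable section

/-- The local polynomial design map `D(v)α = Σ_{i=0}^m (v^i/i!) α_i`. -/
def Dact (m dθ : ℕ) (v : ℝ) (α : Fin (m + 1) → Fin dθ → ℝ) : Fin dθ → ℝ :=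
  ∑ i : Fin (m + 1), ((v ^ (i : ℕ)) / ((i : ℕ).factorial : ℝ)) • α i

section PolynomialCurve

lemma finite_setOf_sum_pow_smul_eq_zero {R M : Type*} [CommRing R] [IsDomain R]
    [AddCommMonoid M] [Module R M] [Module.Projective R M] {n : ℕ} {c : Fin n → M} (hc : c ≠ 0) :
    {t : R | ∑ i : Fin n, t ^ (i : ℕ) • c i = 0}.Finite := by
  classical
  obtain ⟨i, hi⟩ := Function.ne_iff.mp hc
  obtain ⟨φ, hφ⟩ : ∃ φ : Module.Dual R M, φ (c i) ≠ 0 := by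
    simpa using (Module.forall_dual_apply_eq_zero_iff R (c i)).not.mpr hi
  let p : Polynomial R := Polynomial.ofFn n fun k => φ (c k)
  have hp : p ≠ 0 := fun h => hφ <| by
    simpa [p] using congrArg (Polynomial.coeff · i) h
  refine (Polynomial.finite_setOfPred_isRoot hp).subset fun t (ht : _ = 0) => ?_
  have hφt := congrArg φ ht
  simpa [p, Polynomial.ofFn_eq_sum_monomial, Polynomial.eval_finsetSum, mul_comm] using hφt

variable {E : Type*} [AddCommGroup E] [Module ℝ E] {n : ℕ}

/-- The polynomial curve with derivatives `α i` at `0`: the design map `Dact` with values in an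
arbitrary real vector space, so that the identification argument needs no coordinates. -/
def taylorCurve (α : Fin n → E) (v : ℝ) : E :=
  ∑ i : Fin n, ((v ^ (i : ℕ)) / ((i : ℕ).factorial : ℝ)) • α i

lemma taylorCurve_single_zero [NeZero n] (x : E) (v : ℝ) :
    taylorCurve (Pi.single (0 : Fin n) x) v = x := by
  rw [taylorCurve, Fintype.sum_eq_single 0 fun i hi => by simp [hi]]
  simp

lemma continuous_taylorCurve [TopologicalSpace E] [ContinuousAdd E] [ContinuousSMul ℝ E]
    (α : Fin n → E) : Continuous (taylorCurve α) := by
  unfold taylorCurve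
  fun_prop

lemma finite_setOf_taylorCurve_eq {α β : Fin n → E} (h : α ≠ β) :
    {v : ℝ | taylorCurve α v = taylorCurve β v}.Finite := by
  let c : Fin n → E := fun i => ((i : ℕ).factorial : ℝ)⁻¹ • (α i - β i)
  have hc : c ≠ 0 := by
    obtain ⟨i, hi⟩ := Function.ne_iff.mp h
    exact Function.ne_iff.mpr ⟨i, smul_ne_zero (by positivity) (sub_ne_zero.mpr hi)⟩
  have hsub (v : ℝ) : taylorCurve α v - taylorCurve β v = ∑ i : Fin n, v ^ (i : ℕ) • c i := by
    simp only [taylorCurve, c, ← Finset.sum_sub_distrib, ← smul_sub, smul_smul, div_eq_mul_inv]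
  simpa only [← hsub, sub_eq_zero] using finite_setOf_sum_pow_smul_eq_zero (R := ℝ) hc

end PolynomialCurve

section WeightedIntegral

variable {X : Type*} [MeasurableSpace X] {μ : Measure X} {w : X → ℝ}

lemma integral_mul_lt_integral_mul_of_ae_lt {f h : X → ℝ} (hw : ∀ x, 0 ≤ w x)
    (hwpos : 0 < ∫ x, w x ∂μ) (hf : Integrable (fun x => w x * f x) μ)
    (hh : Integrable (fun x => w x * h x) μ) (hlt : ∀ᵐ x ∂μ, w x ≠ 0 → f x < h x) :
    ∫ x, w x * f x ∂μ < ∫ x, w x * h x ∂μ := by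
  have hmul_lt : ∀ᵐ x ∂μ, w x ≠ 0 → w x * f x < w x * h x :=
    hlt.mono fun x hx hwx => mul_lt_mul_of_pos_left (hx hwx) ((hw x).lt_of_ne' hwx)
  have hle : (fun x => w x * f x) ≤ᵐ[μ] fun x => w x * h x := by
    filter_upwards [hmul_lt] with x hx
    by_cases hwx : w x = 0
    · simp [hwx]
    · exact (hx hwx).le
  refine (integral_mono_ae hf hh hle).lt_of_ne fun heq => hwpos.ne' ?_
  apply integral_eq_zero_of_ae
  filter_upwards [(integral_eq_iff_of_ae_le hf hh hle).mp heq, hmul_lt] with x hx hlt_x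
  exact not_not.mp fun hwx => (hlt_x hwx).ne hx

lemma integrable_mul_of_forall_mem_Icc {f : X → ℝ} {a b : ℝ} (hw : ∀ x, 0 ≤ w x)
    (hwi : Integrable w μ) (hf : AEStronglyMeasurable f μ)
    (hfab : ∀ x, w x ≠ 0 → f x ∈ Set.Icc a b) :
    Integrable (fun x => w x * f x) μ := by
  have hbounds (x : X) : w x * a ≤ w x * f x ∧ w x * f x ≤ w x * b := by
    by_cases hwx : w x = 0
    · simp [hwx]
    · exact ⟨mul_le_mul_of_nonneg_left (hfab x hwx).1 (hw x),
        mul_le_mul_of_nonneg_left (hfab x hwx).2 (hw x)⟩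
  exact integrable_of_le_of_le (hwi.aestronglyMeasurable.mul hf)
    (ae_of_all _ fun x => (hbounds x).1) (ae_of_all _ fun x => (hbounds x).2)
    (hwi.mul_const a) (hwi.mul_const b)

lemma integral_mul_comp_lt_of_ae_ne_maximizer {E : Type*} {Θ : Set E} {g : E → ℝ} {θ₀ : E}
    {γ : X → E} (hgbdd : BddBelow (g '' Θ)) (hgmax : ∀ θ ∈ Θ, θ ≠ θ₀ → g θ < g θ₀)
    (hw : ∀ x, 0 ≤ w x) (hwpos : 0 < ∫ x, w x ∂μ) (hgγmeas : AEStronglyMeasurable (g ∘ γ) μ)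
    (hγΘ : ∀ x, w x ≠ 0 → γ x ∈ Θ) (hγne : ∀ᵐ x ∂μ, γ x ≠ θ₀) :
    ∫ x, w x * g (γ x) ∂μ < ∫ x, w x * g θ₀ ∂μ := by
  have hwi : Integrable w μ := .of_integral_ne_zero hwpos.ne'
  obtain ⟨b, hb⟩ := hgbdd
  have hgle : ∀ θ ∈ Θ, g θ ≤ g θ₀ := fun θ hθ => by
    obtain rfl | hne := eq_or_ne θ θ₀
    exacts [le_rfl, (hgmax θ hθ hne).le]
  have hgγ : Integrable (fun x => w x * g (γ x)) μ :=
    integrable_mul_of_forall_mem_Icc hw hwi hgγmeas fun x hwx =>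
      ⟨hb (Set.mem_image_of_mem g (hγΘ x hwx)), hgle _ (hγΘ x hwx)⟩
  exact integral_mul_lt_integral_mul_of_ae_lt hw hwpos hgγ (hwi.mul_const _) <|
    hγne.mono fun x hne hwx => hgmax _ (hγΘ x hwx) hne

end WeightedIntegral

theorem local_polynomial_identification_general {E : Type*} [AddCommGroup E] [Module ℝ E]
    [TopologicalSpace E] [ContinuousAdd E] [ContinuousSMul ℝ E] [MeasurableSpace E] [BorelSpace E]
    {μ : Measure ℝ} [NullSingletonClass μ] {n : ℕ} [NeZero n] {Θ : Set E} {g : E → ℝ}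
    (hgmeas : Measurable g) (hgbdd : BddBelow (g '' Θ)) {θ₀ : E} (hθ₀ : θ₀ ∈ Θ)
    (hgmax : ∀ θ ∈ Θ, θ ≠ θ₀ → g θ < g θ₀) {K : ℝ → ℝ} (hK0 : ∀ v, 0 ≤ K v)
    (hKpos : 0 < ∫ v, K v ∂μ) :
    (∀ v, taylorCurve (Pi.single (0 : Fin n) θ₀) v ∈ Θ) ∧
      ∀ α : Fin n → E, (∀ v, K v ≠ 0 → taylorCurve α v ∈ Θ) → α ≠ Pi.single 0 θ₀ →
        ∫ v, K v * g (taylorCurve α v) ∂μ <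
          ∫ v, K v * g (taylorCurve (Pi.single (0 : Fin n) θ₀) v) ∂μ := by
  refine ⟨fun v => by rwa [taylorCurve_single_zero], fun α hα hne => ?_⟩
  have hfin := finite_setOf_taylorCurve_eq hne
  simp only [taylorCurve_single_zero] at hfin ⊢
  exact integral_mul_comp_lt_of_ae_ne_maximizer hgbdd hgmax hK0 hKpos
    (hgmeas.comp (continuous_taylorCurve α).measurable).aestronglyMeasurable hα
    (hfin.countable.ae_notMem μ)

/-- identification of the local polynomial population criterion. -/
theorem local_polynomial_identification
    {dθ m : ℕ} (Θ : Set (Fin dθ → ℝ))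
    (g : (Fin dθ → ℝ) → ℝ) (hgmeas : Measurable g)
    (Mg : ℝ) (hgbdd : ∀ θ', |g θ'| ≤ Mg)
    (θ₀ : Fin dθ → ℝ) (hθ₀ : θ₀ ∈ Θ)
    (hgmax : ∀ θ' ∈ Θ, θ' ≠ θ₀ → g θ' < g θ₀)
    (K : ℝ → ℝ) (hKmeas : Measurable K) (hK0 : ∀ v, 0 ≤ K v)
    (hKsupp : HasCompactSupport K) (hKint : (∫ v, K v) = 1)
    (A : Set (Fin (m + 1) → Fin dθ → ℝ))
    (hA : A = {α | ∀ v ∈ tsupport K, Dact m dθ v α ∈ Θ})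
    (αstar : Fin (m + 1) → Fin dθ → ℝ)
    (hαstar : αstar = fun i => if i = 0 then θ₀ else 0) :
    αstar ∈ A ∧
      ∀ α ∈ A, α ≠ αstar →
        (∫ v, K v * g (Dact m dθ v α)) < ∫ v, K v * g (Dact m dθ v αstar) := by
  obtain rfl : αstar = Pi.single 0 θ₀ :=
    hαstar.trans (funext fun i => (Pi.single_apply 0 θ₀ i).symm)
  have hbelow : BddBelow (g '' Θ) :=
    ⟨-Mg, Set.forall_mem_image.mpr fun θ _ => (abs_le.mp (hgbdd θ)).1⟩
  obtain ⟨hmem, hlt⟩ := local_polynomial_identification_general (μ := volume) (n := m + 1)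
    hgmeas hbelow hθ₀ hgmax hK0 (hKint ▸ zero_lt_one)
  subst hA
  exact ⟨fun v _ => hmem v, fun α hα => hlt α fun v hv => hα v (subset_tsupport K hv)⟩
end
end
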